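/- arXiv:1810.05492 — 16 statements merged into one kernel-verified Lean document; each statement's English description precedes it below -/
import Mathlib

section
/- Let T > 0 and m₀ ∈ (0,1]. Then there exists a unique M > 0 satisfying T²M³ + T(2−T)M² + (1−2T)M = m₀, and this solution satisfies M ≤ 1. -/
/-- Let `T > 0` and `m₀ ∈ (0,1]`. Then there exists a unique `M > 0` with
`T²M³ + T(2−T)M² + (1−2T)M = m₀`, and this solution satisfies `M ≤ 1`. -/
theorem stmt_2 (T m₀ : ℝ) (hT : 0 < T) (hm₀ : m₀ ∈ Set.Ioc (0:ℝ) 1) :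
    (∃! M : ℝ, 0 < M ∧ T^2 * M^3 + T*(2 - T) * M^2 + (1 - 2*T) * M = m₀) ∧
    (∀ M : ℝ, 0 < M → T^2 * M^3 + T*(2 - T) * M^2 + (1 - 2*T) * M = m₀ → M ≤ 1) := by
  obtain ⟨h0, h1⟩ := hm₀
  refine ⟨?_, ?_⟩
  · have hc : ContinuousOn
        (fun M : ℝ => T^2 * M^3 + T*(2 - T) * M^2 + (1 - 2*T) * M) (Set.Icc 0 1) := by
      fun_prop
    obtain ⟨M, hM, hMe⟩ := intermediate_value_Icc (zero_le_one' ℝ) hc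
      (show m₀ ∈ Set.Icc _ _ from ⟨by norm_num; exact h0.le, by ring_nf; exact h1⟩)
    simp only at hMe
    have hMpos : 0 < M := by
      rcases hM.1.lt_or_eq with h | h
      · exact h
      · subst h
        norm_num at hMe
        exact absurd hMe h0.ne
    refine ⟨M, ⟨hMpos, hMe⟩, ?_⟩
    rintro N ⟨hN, hNe⟩
    by_contra hne
    have hsub : N - M ≠ 0 := sub_ne_zero.mpr hne
    have hMN : 0 < M * N := mul_pos hMpos hN
    rcases le_total (1 - 2 * T) 0 with h | h
    · have e : (1 - 2*T) * (M*N) - T^2 * (M*N)^2 = m₀ * (N + M) := by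
        apply mul_left_cancel₀ hsub
        linear_combination N^2 * hMe - M^2 * hNe
      have := mul_nonneg_of_nonpos_of_nonpos h (neg_nonpos.mpr hMN.le)
      have : 0 < m₀ * (N + M) := by positivity
      have : 0 ≤ T^2 * (M*N)^2 := by positivity
      linarith
    · have e : T^2 * (M^2 + M*N + N^2) + T*(2-T)*(M+N) + (1 - 2*T) = 0 := by
        apply mul_left_cancel₀ hsub
        linear_combination hNe - hMe
      have h2 : 0 < 2 - T := by linarith
      have : 0 < T*(2-T)*(M+N) := by positivity
      have : 0 < T^2 * (M^2 + M*N + N^2) := by positivity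
      linarith
  · intro M hM hMe
    by_contra! h
    have hp : 0 < (M - 1) * (1 + T*M)^2 := by
      have : 0 < M - 1 := by linarith
      positivity
    have : (M - 1) * (1 + T*M)^2 = m₀ - 1 := by linear_combination hMe
    linarith
end

section
/- Let T > 0 and m₀ ∈ (0,1], and let T(m₀) ∈ [1/2,2] be the unique solution of |m₀| = (2T−1)²(T+4)/(27T) in [1/2,2]. Then the number of solutions M < 0 of the equation T²M³ − T(2−T)M² + (1−2T)M = m₀ is: zero if T < T(m₀), exactly one if T = T(m₀), and exactly two if T > T(m₀). -/
lemma aux_mono (a b : ℝ) (ha : 1/2 ≤ a) (hab : a < b) :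
    (2*a-1)^2*(a+4)/(27*a) < (2*b-1)^2*(b+4)/(27*b) := by
  have hb : 1/2 < b := lt_of_le_of_lt ha hab
  have h1 : 1/4 < a*b := by nlinarith
  have h2 : 0 < (a+b)*(a*b) + 3*(a*b) - 1 := by nlinarith
  rw [div_lt_div_iff₀ (by linarith) (by linarith)]
  have h3 := mul_pos (sub_pos.2 hab) h2
  nlinarith

lemma aux_id (T M : ℝ) (hT : 0 < T) :
    T^2 * M^3 - T*(2 - T) * M^2 + (1 - 2*T) * M = (2*T-1)^2*(T+4)/(27*T)
      - T^2 * (M - (1-2*T)/(3*T))^2 * ((T+4)/(3*T) - M) := by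
  field_simp
  ring

/-- Let `T > 0` and `m₀ ∈ (0,1]`, and let `Tm ∈ [1/2,2]` be the (unique) solution of
`|m₀| = (2T−1)²(T+4)/(27T)` in `[1/2,2]`. Then the number of solutions `M < 0` of
`T²M³ − T(2−T)M² + (1−2T)M = m₀` is: zero if `T < Tm`, exactly one if `T = Tm`,
and exactly two if `T > Tm`. -/
theorem stmt_3 (T m₀ Tm : ℝ) (hT : 0 < T) (hm₀ : m₀ ∈ Set.Ioc (0:ℝ) 1)
    (hTm : Tm ∈ Set.Icc (1/2 : ℝ) 2 ∧ |m₀| = (2*Tm - 1)^2 * (Tm + 4) / (27*Tm)) :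
    (T < Tm →
      {M : ℝ | M < 0 ∧ T^2 * M^3 - T*(2 - T) * M^2 + (1 - 2*T) * M = m₀} = ∅) ∧
    (T = Tm →
      {M : ℝ | M < 0 ∧ T^2 * M^3 - T*(2 - T) * M^2 + (1 - 2*T) * M = m₀}.ncard = 1) ∧
    (Tm < T →
      {M : ℝ | M < 0 ∧ T^2 * M^3 - T*(2 - T) * M^2 + (1 - 2*T) * M = m₀}.ncard = 2) := by
  obtain ⟨⟨hl, hu⟩, he⟩ := hTm
  obtain ⟨hm, hm1⟩ := hm₀
  rw [abs_of_pos hm] at he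
  have hhalf : 1/2 < Tm := by
    rcases hl.lt_or_eq with h | h
    · exact h
    · rw [← h] at he
      norm_num at he
      linarith
  have hr : 0 < (T+4)/(3*T) := by positivity
  refine ⟨fun h => ?_, fun h => ?_, fun h => ?_⟩
  · ext M
    simp only [Set.mem_setOf_eq, Set.mem_empty_iff_false, iff_false, not_and]
    intro hM hE
    rcases le_or_gt T (1/2) with h2 | h2
    · have e1 : M^3 < 0 := by
        have := pow_pos (neg_pos.2 hM) 3
        nlinarith
      have e2 : T^2 * M^3 < 0 := mul_neg_of_pos_of_neg (by positivity) e1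
      have e3 : 0 ≤ T*(2-T)*M^2 := mul_nonneg (mul_nonneg hT.le (by linarith)) (sq_nonneg M)
      have e4 : (1-2*T)*M ≤ 0 := mul_nonpos_of_nonneg_of_nonpos (by linarith) hM.le
      linarith
    · have h3 := aux_mono T Tm h2.le h
      rw [aux_id T M hT] at hE
      have : 0 ≤ T^2 * (M - (1-2*T)/(3*T))^2 * ((T+4)/(3*T) - M) :=
        mul_nonneg (by positivity) (by linarith)
      linarith
  · subst h
    rw [Set.ncard_eq_one]
    refine ⟨(1-2*T)/(3*T), ?_⟩
    ext M
    simp only [Set.mem_setOf_eq, Set.mem_singleton_iff]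
    rw [aux_id T M hT, ← he]
    constructor
    · rintro ⟨hM, hE⟩
      have h0 : T^2 * (M - (1-2*T)/(3*T))^2 * ((T+4)/(3*T) - M) = 0 := by linarith
      have h1 : (T+4)/(3*T) - M ≠ 0 := by linarith
      have h2 : T^2 ≠ 0 := by positivity
      have h4 : (M - (1-2*T)/(3*T))^2 = 0 := by
        rcases mul_eq_zero.1 h0 with h | h
        · exact (mul_eq_zero.1 h).resolve_left h2
        · exact absurd h h1
      have := pow_eq_zero_iff (two_ne_zero) |>.1 h4
      linarith
    · intro h
      refine ⟨?_, ?_⟩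
      · rw [h]
        exact div_neg_of_neg_of_pos (by linarith) (by linarith)
      · rw [h]; ring
  · have h3 := aux_mono Tm T hl h
    have hT2 : 1/2 < T := hhalf.trans h
    have hc0 : (1-2*T)/(3*T) < 0 := div_neg_of_neg_of_pos (by linarith) (by linarith)
    have hc2 : -2 < (1-2*T)/(3*T) := by
      rw [lt_div_iff₀ (by linarith)]; linarith
    have hfc := aux_id T ((1-2*T)/(3*T)) hT
    rw [sub_self] at hfc
    set c := (1-2*T)/(3*T) with hc
    let f : ℝ → ℝ := fun M => T^2 * M^3 - T*(2 - T) * M^2 + (1 - 2*T) * M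
    have hf : Continuous f := by fun_prop
    have hfc' : m₀ < f c := by
      show m₀ < T^2 * c^3 - T*(2 - T) * c^2 + (1 - 2*T) * c
      rw [hfc]; linarith
    have hf2 : f (-2) < m₀ := by
      show T^2 * (-2)^3 - T*(2 - T) * (-2)^2 + (1 - 2*T) * (-2) < m₀
      nlinarith [sq_nonneg T]
    have hf0 : f 0 < m₀ := by
      simpa [f] using hm
    obtain ⟨a, ⟨ha1, ha2⟩, ha⟩ := intermediate_value_Ioo hc2.le hf.continuousOn ⟨hf2, hfc'⟩
    obtain ⟨b, ⟨hb1, hb2⟩, hb⟩ := intermediate_value_Ioo' hc0.le hf.continuousOn ⟨hf0, hfc'⟩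
    have hab : a < b := ha2.trans hb1
    have ha0 : a < 0 := hab.trans hb2
    simp only [f] at ha hb
    rw [Set.ncard_eq_two]
    refine ⟨a, b, hab.ne, ?_⟩
    ext M
    simp only [Set.mem_setOf_eq, Set.mem_insert_iff, Set.mem_singleton_iff]
    constructor
    · rintro ⟨hM, hE⟩
      by_contra hne
      push Not at hne
      have d1 : T^2*(a^2+a*b+b^2) - T*(2-T)*(a+b) + (1-2*T) = 0 := by
        apply mul_left_cancel₀ (sub_ne_zero.2 hab.ne)
        linear_combination ha - hb
      have d2 : T^2*(a^2+a*M+M^2) - T*(2-T)*(a+M) + (1-2*T) = 0 := by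
        apply mul_left_cancel₀ (sub_ne_zero.2 hne.1)
        linear_combination hE - ha
      have d3 : T^2*(a+b+M) - T*(2-T) = 0 := by
        apply mul_left_cancel₀ (sub_ne_zero.2 hne.2)
        linear_combination d2 - d1
      have d4 : T^2*(a*b+a*M+b*M) = 1-2*T := by
        linear_combination (a+b)*d3 - d1
      have p1 := mul_pos_of_neg_of_neg ha0 hb2
      have p2 := mul_pos_of_neg_of_neg ha0 hM
      have p3 := mul_pos_of_neg_of_neg hb2 hM
      have : 0 < T^2*(a*b+a*M+b*M) := by positivity
      linarith
    · rintro (h | h)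
      · rw [h]; exact ⟨ha0, ha⟩
      · rw [h]; exact ⟨hb2, hb⟩
end

section
/- Let T > 0 and consider the consistency equation T²M³ + T(2−T)M|M| + (1−2T)M = 0 (i.e. with m₀ = 0). If T ≤ 1/2, its only real solution is M = 0. If T > 1/2, it has exactly three real solutions: 0, M₊ and −M₊, where M₊ is the unique positive root of T²M² + T(2−T)M + 1 − 2T = 0. -/
/-- Let `T > 0` and consider `T²M³ + T(2−T)M|M| + (1−2T)M = 0`. If `T ≤ 1/2`,
its only real solution is `M = 0`. If `T > 1/2`, it has exactly three real
solutions: `0`, `M₊` and `−M₊`, where `M₊` is the unique positive root of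
`T²M² + T(2−T)M + 1 − 2T = 0`. -/
theorem stmt_4 (T : ℝ) (hT : 0 < T) :
    (T ≤ 1/2 →
      {M : ℝ | T^2 * M^3 + T*(2 - T) * M * |M| + (1 - 2*T) * M = 0} = {0}) ∧
    (1/2 < T → ∃ Mp : ℝ, 0 < Mp ∧
      T^2 * Mp^2 + T*(2 - T) * Mp + 1 - 2*T = 0 ∧
      (∀ M' : ℝ, 0 < M' → T^2 * M'^2 + T*(2 - T) * M' + 1 - 2*T = 0 → M' = Mp) ∧
      {M : ℝ | T^2 * M^3 + T*(2 - T) * M * |M| + (1 - 2*T) * M = 0}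
        = {0, Mp, -Mp}) := by
  have key : ∀ M : ℝ, T^2 * M^3 + T*(2 - T) * M * |M| + (1 - 2*T) * M
      = M * (T^2 * |M|^2 + T*(2 - T) * |M| + 1 - 2*T) := by
    intro M
    rw [sq_abs]
    ring
  constructor
  · intro h
    ext M
    simp only [Set.mem_setOf_eq, Set.mem_singleton_iff]
    rw [key, mul_eq_zero]
    refine ⟨fun h' => ?_, fun h' => Or.inl h'⟩
    rcases h' with h' | h'
    · exact h'
    · by_contra hM
      have hp : 0 < |M| := abs_pos.mpr hM
      have h1 : 0 < T^2 * |M|^2 := by positivity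
      have h2 : 0 < T*(2 - T) * |M| := mul_pos (mul_pos hT (by linarith)) hp
      linarith
  · intro h
    set s := Real.sqrt (T^2 + 4*T) with hs
    have hs2 : s^2 = T^2 + 4*T := Real.sq_sqrt (by positivity)
    have hs0 : 0 ≤ s := Real.sqrt_nonneg _
    have hpos : 0 < T - 2 + s := by nlinarith
    have hMp : 0 < (T - 2 + s) / (2*T) := by positivity
    have hroot : T^2 * ((T - 2 + s) / (2*T))^2 + T*(2 - T) * ((T - 2 + s) / (2*T))
        + 1 - 2*T = 0 := by
      field_simp
      nlinarith
    generalize (T - 2 + s) / (2*T) = Mp at hMp hroot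
    have huniq : ∀ M' : ℝ, 0 < M' →
        T^2 * M'^2 + T*(2 - T) * M' + 1 - 2*T = 0 → M' = Mp := by
      intro M' hM' hr
      have h1 : (M' - Mp) * (T^2 * M' * Mp + (2*T - 1)) = 0 := by
        linear_combination Mp * hr - M' * hroot
      have h2 : 0 < T^2 * M' * Mp := by positivity
      rcases mul_eq_zero.mp h1 with h3 | h3
      · linarith
      · linarith
    refine ⟨Mp, hMp, hroot, huniq, ?_⟩
    ext M
    simp only [Set.mem_setOf_eq, Set.mem_insert_iff, Set.mem_singleton_iff]
    rw [key, mul_eq_zero]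
    constructor
    · rintro (h' | h')
      · exact Or.inl h'
      · by_cases hM : M = 0
        · exact Or.inl hM
        · exact Or.inr (eq_or_eq_neg_of_abs_eq (huniq _ (abs_pos.mpr hM) h'))
    · rintro (h' | h' | h')
      · exact Or.inl h'
      · right
        rw [h', abs_of_pos hMp]
        exact hroot
      · right
        rw [h', abs_neg, abs_of_pos hMp]
        exact hroot
end

section
/- Let T > 0 and M ∈ ℝ, and define z(t) = 2M / (|M|(T−t) + 1) for t ∈ [0,T]. Then z is differentiable on [0,T], satisfies z′(t) = z(t)|z(t)|/2 for all t ∈ [0,T], and z(T) = 2M. Moreover, z is the unique such function: any differentiable w : [0,T] → ℝ satisfying w′(t) = w(t)|w(t)|/2 on [0,T] with w(T) = 2M coincides with z. -/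
/-- Let `T > 0`, `M ∈ ℝ`, and `z(t) = 2M/(|M|(T−t)+1)` on `[0,T]`. Then `z` is
differentiable on `[0,T]`, solves `z′ = z|z|/2` there, and `z(T) = 2M`; moreover
it is the unique such function. -/
theorem stmt_5 (T M : ℝ) (hT : 0 < T) :
    (∀ t ∈ Set.Icc (0:ℝ) T,
      HasDerivWithinAt (fun s : ℝ => 2*M / (|M| * (T - s) + 1))
        ((2*M / (|M| * (T - t) + 1)) * |2*M / (|M| * (T - t) + 1)| / 2)
        (Set.Icc (0:ℝ) T) t) ∧
    (2*M / (|M| * (T - T) + 1) = 2*M) ∧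
    (∀ w : ℝ → ℝ,
      (∀ t ∈ Set.Icc (0:ℝ) T,
        HasDerivWithinAt w (w t * |w t| / 2) (Set.Icc (0:ℝ) T) t) →
      w T = 2*M →
      ∀ t ∈ Set.Icc (0:ℝ) T, w t = 2*M / (|M| * (T - t) + 1)) := by
  have hz : ∀ t ∈ Set.Icc (0:ℝ) T,
      HasDerivWithinAt (fun s : ℝ => 2*M / (|M| * (T - s) + 1))
        ((2*M / (|M| * (T - t) + 1)) * |2*M / (|M| * (T - t) + 1)| / 2)
        (Set.Icc (0:ℝ) T) t := by
    intro t ht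
    have hpos : 0 < |M| * (T - t) + 1 := by
      have := mul_nonneg (abs_nonneg M) (sub_nonneg.2 ht.2)
      linarith
    have h1 : HasDerivAt (fun s : ℝ => |M| * (T - s) + 1) (|M| * (-1)) t :=
      (((hasDerivAt_id t).const_sub T).const_mul |M|).add_const 1
    have h2 := (hasDerivAt_const t (2*M)).div h1 hpos.ne'
    refine (h2.congr_deriv ?_).hasDerivWithinAt
    rw [abs_div, abs_of_pos hpos, abs_mul, abs_of_pos (two_pos : (0:ℝ) < 2)]
    field_simp
    ring
  refine ⟨hz, by simp, ?_⟩
  intro w hw hwT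
  have hwc : ContinuousOn w (Set.Icc 0 T) := fun t ht => (hw t ht).continuousWithinAt
  have hzc : ContinuousOn (fun s : ℝ => 2*M / (|M| * (T - s) + 1)) (Set.Icc 0 T) :=
    fun t ht => (hz t ht).continuousWithinAt
  obtain ⟨C₁, hC₁⟩ := isCompact_Icc.exists_bound_of_continuousOn hwc
  obtain ⟨C₂, hC₂⟩ := isCompact_Icc.exists_bound_of_continuousOn hzc
  have hC0 : 0 ≤ max C₁ C₂ :=
    ((norm_nonneg _).trans (hC₁ T ⟨hT.le, le_rfl⟩)).trans (le_max_left _ _)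
  have key : Set.EqOn w (fun s : ℝ => 2*M / (|M| * (T - s) + 1)) (Set.Icc 0 T) := by
    refine ODE_solution_unique_of_mem_Icc_left (v := fun _ x => x * |x| / 2)
      (s := fun _ => {x : ℝ | |x| ≤ max C₁ C₂}) (K := ⟨max C₁ C₂, hC0⟩) ?_ hwc ?_ ?_ hzc ?_ ?_ ?_
    · intro t _
      refine LipschitzOnWith.of_dist_le_mul ?_
      intro x hx y hy
      simp only [Set.mem_setOf_eq] at hx hy
      rw [Real.dist_eq, Real.dist_eq]
      change _ ≤ max C₁ C₂ * _
      have e : x * |x| / 2 - y * |y| / 2 = (x * (|x| - |y|) + (x - y) * |y|) / 2 := by ring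
      rw [e, abs_div, abs_of_pos (two_pos : (0:ℝ) < 2)]
      have h1 := abs_add_le (x * (|x| - |y|)) ((x - y) * |y|)
      rw [abs_mul, abs_mul, abs_abs] at h1
      have h2 : |x| * |(|x| - |y|)| ≤ max C₁ C₂ * |x - y| :=
        mul_le_mul hx (abs_abs_sub_abs_le_abs_sub x y) (abs_nonneg _) hC0
      have h3 := mul_le_mul_of_nonneg_left hy (abs_nonneg (x - y))
      linarith
    · intro t ht
      exact (hw t ⟨ht.1.le, ht.2⟩).mono_of_mem_nhdsWithin (Icc_mem_nhdsLE_of_mem ht)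
    · intro t ht
      exact (hC₁ t ⟨ht.1.le, ht.2⟩).trans (le_max_left _ _)
    · intro t ht
      exact (hz t ⟨ht.1.le, ht.2⟩).mono_of_mem_nhdsWithin (Icc_mem_nhdsLE_of_mem ht)
    · intro t ht
      exact (hC₂ t ⟨ht.1.le, ht.2⟩).trans (le_max_right _ _)
    · simp [hwT]
  exact fun t ht => key ht
end

section
/- Let T > 0, M ∈ ℝ with M ≠ 0, and m₀ ∈ ℝ. Define z(t) = 2M/(|M|(T−t)+1) and m(t) = (m₀ − sgn(M)) · ((|M|(T−t)+1)/(|M|T+1))² + sgn(M) for t ∈ [0,T]. Then m is differentiable on [0,T], satisfies m′(t) = −m(t)|z(t)| + z(t) for all t ∈ [0,T] and m(0) = m₀; moreover m is the unique differentiable function on [0,T] with these two properties. -/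
/-- Let `T > 0`, `M ≠ 0`, `m₀ ∈ ℝ`, `z(t) = 2M/(|M|(T−t)+1)` and
`m(t) = (m₀ − sgn M)·((|M|(T−t)+1)/(|M|T+1))² + sgn M` on `[0,T]`. Then `m` is
differentiable on `[0,T]`, solves `m′ = −m|z| + z` there with `m(0) = m₀`, and is
the unique differentiable function on `[0,T]` with these two properties. -/
theorem stmt_6 (T M m₀ : ℝ) (hT : 0 < T) (hM : M ≠ 0) :
    let z : ℝ → ℝ := fun t => 2*M / (|M| * (T - t) + 1)
    let m : ℝ → ℝ := fun t =>
      (m₀ - Real.sign M) * ((|M| * (T - t) + 1) / (|M| * T + 1))^2 + Real.sign M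
    (∀ t ∈ Set.Icc (0:ℝ) T,
      HasDerivWithinAt m (-(m t) * |z t| + z t) (Set.Icc (0:ℝ) T) t) ∧
    m 0 = m₀ ∧
    (∀ w : ℝ → ℝ,
      (∀ t ∈ Set.Icc (0:ℝ) T,
        HasDerivWithinAt w (-(w t) * |z t| + z t) (Set.Icc (0:ℝ) T) t) →
      w 0 = m₀ →
      ∀ t ∈ Set.Icc (0:ℝ) T, w t = m t) := by
  intro z m
  obtain ⟨s, a, hs, ha, haM, hMs, hsgn⟩ : ∃ s a : ℝ, s ^ 2 = 1 ∧ 0 < a ∧ |M| = a ∧ M = s * a ∧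
      Real.sign M = s := by
    rcases lt_or_gt_of_ne hM with h | h
    · exact ⟨-1, -M, by norm_num, by linarith, abs_of_neg h, by ring, Real.sign_of_neg h⟩
    · exact ⟨1, M, by norm_num, h, abs_of_pos h, by ring, Real.sign_of_pos h⟩
  have hD : ∀ t ∈ Set.Icc (0:ℝ) T, 0 < a * (T - t) + 1 := by
    intro t ht
    have := mul_nonneg ha.le (sub_nonneg.2 ht.2)
    linarith
  have hE : 0 < a * T + 1 := by positivity
  have hz : ∀ t, z t = 2 * (s * a) / (a * (T - t) + 1) := by
    intro t
    simp only [z, haM]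
    rw [hMs]
  have hza : ∀ t ∈ Set.Icc (0:ℝ) T, |z t| = 2 * a / (a * (T - t) + 1) := by
    intro t ht
    simp only [z]
    rw [abs_div, abs_mul, haM, abs_of_pos (hD t ht), abs_two]
  have hm : ∀ t, m t = (m₀ - s) * ((a * (T - t) + 1) / (a * T + 1)) ^ 2 + s := by
    intro t
    simp only [m, haM, hsgn]
  have hdD : ∀ t : ℝ, HasDerivAt (fun t : ℝ => a * (T - t) + 1) (-a) t := by
    intro t
    have := (((hasDerivAt_id t).const_sub T).const_mul a).add_const 1
    simpa using this
  have hm0 : m 0 = m₀ := by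
    rw [hm, sub_zero, div_self hE.ne']
    ring
  refine ⟨?_, hm0, ?_⟩
  · intro t ht
    have h1 := (((((hdD t).div_const (a * T + 1)).pow 2).const_mul (m₀ - s)).add_const s)
    have h2 : m = fun t => (m₀ - s) * ((a * (T - t) + 1) / (a * T + 1)) ^ 2 + s := funext hm
    have h3 : HasDerivAt m (-(m t) * |z t| + z t) t := by
      rw [h2]
      refine HasDerivAt.congr_deriv h1 ?_
      simp only [Nat.add_one_sub_one, Nat.cast_ofNat, Nat.reduceSub, pow_one]
      rw [hza t ht, hz]
      have := (hD t ht).ne'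
      have := hE.ne'
      field_simp
      ring
    exact h3.hasDerivWithinAt
  · intro w hw hw0 t ht
    have hg : ∀ t ∈ Set.Icc (0:ℝ) T,
        HasDerivWithinAt (fun t => (w t - s) / (a * (T - t) + 1) ^ 2) 0 (Set.Icc (0:ℝ) T) t := by
      intro t ht
      have hd := (hD t ht).ne'
      have h1 := ((hw t ht).sub_const s).div ((hdD t).pow 2).hasDerivWithinAt (pow_ne_zero 2 hd)
      refine HasDerivWithinAt.congr_deriv h1 ?_
      rw [hza t ht, hz]
      simp only [Pi.pow_apply]
      field_simp
      ring
    have hc := constant_of_has_deriv_right_zero (fun t ht => (hg t ht).continuousWithinAt)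
      (fun t ht => (hg t ⟨ht.1, ht.2.le⟩).mono_of_mem_nhdsWithin
        (Icc_mem_nhdsGE_of_mem ht)) t ht
    have hd := (hD t ht).ne'
    simp only [hw0, sub_zero] at hc
    rw [hm]
    rw [div_eq_iff (pow_ne_zero 2 hd)] at hc
    rw [div_pow]
    linear_combination hc
end

section
/- Let T > 0, M ∈ ℝ with M ≠ 0, m₀ ∈ ℝ, and let m(t) = (m₀ − sgn(M)) · ((|M|(T−t)+1)/(|M|T+1))² + sgn(M). Then m(T) = M if and only if T²M³ + T(2−T)M|M| + (1−2T)M − m₀ = 0. -/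
/-- Let `T > 0`, `M ≠ 0`, `m₀ ∈ ℝ`, and
`m(t) = (m₀ − sgn M)·((|M|(T−t)+1)/(|M|T+1))² + sgn M`. Then `m(T) = M` iff
`T²M³ + T(2−T)M|M| + (1−2T)M − m₀ = 0`. -/
theorem stmt_7 (T M m₀ : ℝ) (hT : 0 < T) (hM : M ≠ 0) :
    let m : ℝ → ℝ := fun t =>
      (m₀ - Real.sign M) * ((|M| * (T - t) + 1) / (|M| * T + 1))^2 + Real.sign M
    (m T = M ↔ T^2 * M^3 + T*(2 - T) * M * |M| + (1 - 2*T) * M - m₀ = 0) := by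
  intro m
  have hD : 0 < |M| * T + 1 := by positivity
  have hm : m T = (m₀ - Real.sign M) / (|M| * T + 1)^2 + Real.sign M := by
    simp only [m, sub_self, mul_zero, zero_add, div_pow, one_pow, mul_one_div]
  have key : m T = M ↔ m₀ - Real.sign M = (M - Real.sign M) * (|M| * T + 1)^2 := by
    rw [hm, ← eq_sub_iff_add_eq, div_eq_iff (by positivity)]
  rw [key]
  rcases lt_or_gt_of_ne hM with h | h
  · rw [Real.sign_of_neg h, abs_of_neg h]
    constructor <;> intro h1 <;> linear_combination -h1
  · rw [Real.sign_of_pos h, abs_of_pos h]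
    constructor <;> intro h1 <;> linear_combination -h1
end

section
/- Let m₀ ∈ [−1,1] with m₀ ≠ 0, let T > 0, and let T(m₀) ∈ [1/2,2] be the unique solution in [1/2,2] of |m₀| = (2T−1)²(T+4)/(27T). Consider the mean field game system: pairs (z,m) of differentiable functions [0,T] → ℝ satisfying z′(t) = z(t)|z(t)|/2 and m′(t) = −m(t)|z(t)| + z(t) for all t ∈ [0,T], with z(T) = 2m(T) and m(0) = m₀. Then this system admits exactly one solution if T < T(m₀), exactly two distinct solutions if T = T(m₀), and exactly three distinct solutions if T > T(m₀). -/
/-- A solution of the two-state mean field game system on `[0,T]` with initial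
mean `m₀`: a pair `(z,m)` of functions differentiable on `[0,T]` with
`z′ = z|z|/2`, `m′ = −m|z| + z`, `z(T) = 2m(T)`, `m(0) = m₀`. -/
def MFGSol (T m₀ : ℝ) (z m : ℝ → ℝ) : Prop :=
  (∀ t ∈ Set.Icc (0:ℝ) T,
    HasDerivWithinAt z (z t * |z t| / 2) (Set.Icc (0:ℝ) T) t) ∧
  (∀ t ∈ Set.Icc (0:ℝ) T,
    HasDerivWithinAt m (-(m t) * |z t| + z t) (Set.Icc (0:ℝ) T) t) ∧
  z T = 2 * m T ∧ m 0 = m₀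

/-- The mean field game system has exactly `n` solutions (as pairs of functions
on `[0,T]`). -/
def MFGExactly (T m₀ : ℝ) (n : ℕ) : Prop :=
  ∃ sols : Fin n → (ℝ → ℝ) × (ℝ → ℝ),
    (∀ i, MFGSol T m₀ (sols i).1 (sols i).2) ∧
    (∀ i j, i ≠ j →
      ¬ (Set.EqOn (sols i).1 (sols j).1 (Set.Icc 0 T) ∧
         Set.EqOn (sols i).2 (sols j).2 (Set.Icc 0 T))) ∧
    (∀ z m : ℝ → ℝ, MFGSol T m₀ z m →
      ∃ i, Set.EqOn z (sols i).1 (Set.Icc 0 T) ∧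
           Set.EqOn m (sols i).2 (Set.Icc 0 T))

noncomputable def zsol (T x t : ℝ) : ℝ := 2 * x / (1 + |x| * (T - t))

noncomputable def msol (T x t : ℝ) : ℝ :=
  x * (1 + |x| * (T - t)) ^ 2 - x * (T - t) * (2 + |x| * (T - t))

noncomputable def gfun (T b : ℝ) : ℝ := T ^ 2 * b ^ 3 + (2 * T - T ^ 2) * b ^ 2 + (1 - 2 * T) * b

lemma den_pos (T x t : ℝ) (ht : t ≤ T) : 0 < 1 + |x| * (T - t) := by
  have := mul_nonneg (abs_nonneg x) (sub_nonneg.2 ht)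
  linarith

lemma zsol_deriv (T x t : ℝ) (ht : t ≤ T) :
    HasDerivAt (zsol T x) (zsol T x t * |zsol T x t| / 2) t := by
  have hE := den_pos T x t ht
  have h1 : HasDerivAt (fun t : ℝ => 1 + |x| * (T - t)) (|x| * (-1)) t :=
    (((hasDerivAt_id t).const_sub T).const_mul |x|).const_add 1
  have h2 := (hasDerivAt_const t (2 * x)).div h1 hE.ne'
  have habs : |zsol T x t| = 2 * |x| / (1 + |x| * (T - t)) := by
    unfold zsol
    rw [abs_div, abs_mul, abs_of_pos hE]; norm_num
  rw [habs]
  refine h2.congr_deriv ?_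
  unfold zsol
  field_simp
  ring

lemma msol_deriv (T x t : ℝ) (ht : t ≤ T) :
    HasDerivAt (msol T x) (-(msol T x t) * |zsol T x t| + zsol T x t) t := by
  have hE := den_pos T x t ht
  have h0 : HasDerivAt (fun t : ℝ => T - t) (-1) t := (hasDerivAt_id t).const_sub T
  have h1 : HasDerivAt (fun t : ℝ => |x| * (T - t)) (|x| * (-1)) t := h0.const_mul |x|
  have h2 := (((h1.const_add 1).pow 2).const_mul x).sub ((h0.const_mul x).mul (h1.const_add 2))
  have habs : |zsol T x t| = 2 * |x| / (1 + |x| * (T - t)) := by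
    unfold zsol
    rw [abs_div, abs_mul, abs_of_pos hE]; norm_num
  rw [habs]
  refine HasDerivAt.congr_deriv (f' := _) h2 ?_
  unfold zsol msol
  generalize |x| = a at *
  simp only [Nat.cast_ofNat]
  field_simp
  ring

lemma hasDeriv_Iic {T t d : ℝ} {f : ℝ → ℝ} (ht : t ∈ Set.Ioc (0:ℝ) T)
    (h : HasDerivWithinAt f d (Set.Icc 0 T) t) : HasDerivWithinAt f d (Set.Iic t) t := by
  refine h.mono_of_mem_nhdsWithin ?_
  filter_upwards [self_mem_nhdsWithin, mem_nhdsWithin_of_mem_nhds (Ioi_mem_nhds ht.1)] with y hy hy'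
  exact ⟨le_of_lt hy', le_trans hy ht.2⟩

lemma sol_unique {T m₀ : ℝ} (hT : 0 < T) {z m : ℝ → ℝ} (h : MFGSol T m₀ z m) :
    Set.EqOn z (zsol T (m T)) (Set.Icc 0 T) ∧ Set.EqOn m (msol T (m T)) (Set.Icc 0 T) := by
  obtain ⟨hz, hm, hzT, -⟩ := h
  set x := m T with hx
  have hzc : ContinuousOn z (Set.Icc 0 T) := fun t ht => (hz t ht).continuousWithinAt
  have hmc : ContinuousOn m (Set.Icc 0 T) := fun t ht => (hm t ht).continuousWithinAt
  have hZc : ContinuousOn (zsol T x) (Set.Icc 0 T) :=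
    fun t ht => (zsol_deriv T x t ht.2).continuousAt.continuousWithinAt
  have hMc : ContinuousOn (msol T x) (Set.Icc 0 T) :=
    fun t ht => (msol_deriv T x t ht.2).continuousAt.continuousWithinAt
  obtain ⟨R1, hR1⟩ := isCompact_Icc.exists_bound_of_continuousOn hzc
  obtain ⟨R2, hR2⟩ := isCompact_Icc.exists_bound_of_continuousOn hZc
  set R : NNReal := Real.toNNReal (max R1 R2) with hR
  have hRc : max R1 R2 ≤ (R : ℝ) := Real.le_coe_toNNReal _
  have b1 : ∀ t ∈ Set.Icc 0 T, |z t| ≤ R := fun t ht =>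
    (hR1 t ht).trans ((le_max_left _ _).trans hRc)
  have b2 : ∀ t ∈ Set.Icc 0 T, |zsol T x t| ≤ R := fun t ht =>
    (hR2 t ht).trans ((le_max_right _ _).trans hRc)
  have ez : Set.EqOn z (zsol T x) (Set.Icc 0 T) := by
    refine ODE_solution_unique_of_mem_Icc_left (v := fun _ y => y * |y| / 2)
      (s := fun _ => {y : ℝ | |y| ≤ R}) (K := R) ?_ hzc
      (fun t ht => hasDeriv_Iic ht (hz t ⟨ht.1.le, ht.2⟩))
      (fun t ht => b1 t ⟨ht.1.le, ht.2⟩) hZc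
      (fun t ht => (zsol_deriv T x t ht.2).hasDerivWithinAt)
      (fun t ht => b2 t ⟨ht.1.le, ht.2⟩) ?_
    · intro t ht
      refine LipschitzOnWith.of_dist_le_mul ?_
      intro y hy w hw
      simp only [Set.mem_setOf_eq] at hy hw
      rw [Real.dist_eq, Real.dist_eq]
      have e : y * |y| / 2 - w * |w| / 2 = (y - w) * ((|y| + |w|) / 4) + (|y| - |w|) * ((y + w) / 4) := by
        ring
      have k1 : |(y - w) * ((|y| + |w|) / 4)| ≤ |y - w| * (R / 2) := by
        rw [abs_mul]
        refine mul_le_mul_of_nonneg_left ?_ (abs_nonneg _)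
        rw [abs_of_nonneg (by positivity)]; linarith
      have k2 : |(|y| - |w|) * ((y + w) / 4)| ≤ |y - w| * (R / 2) := by
        rw [abs_mul]
        refine mul_le_mul (abs_abs_sub_abs_le _ _) ?_ (abs_nonneg _) (abs_nonneg _)
        rw [abs_div, abs_of_pos (by norm_num : (0:ℝ) < 4)]
        have := abs_add_le y w
        linarith
      rw [e]
      have := abs_add_le ((y - w) * ((|y| + |w|) / 4)) ((|y| - |w|) * ((y + w) / 4))
      linarith
    · simp [zsol, hzT]
  refine ⟨ez, ?_⟩
  refine ODE_solution_unique_of_mem_Icc_left (v := fun t y => -y * |z t| + z t)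
      (s := fun _ => Set.univ) (K := R) ?_ hmc
      (fun t ht => hasDeriv_Iic ht (hm t ⟨ht.1.le, ht.2⟩))
      (fun t ht => Set.mem_univ _) hMc
      (fun t ht => ?_)
      (fun t ht => Set.mem_univ _) ?_
  · intro t ht
    refine LipschitzOnWith.of_dist_le_mul ?_
    intro y _ w _
    rw [Real.dist_eq, Real.dist_eq]
    have e : -y * |z t| + z t - (-w * |z t| + z t) = -(|z t| * (y - w)) := by ring
    rw [e, abs_neg, abs_mul, abs_abs]
    exact mul_le_mul_of_nonneg_right (b1 t ⟨ht.1.le, ht.2⟩) (abs_nonneg _)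
  · have := (msol_deriv T x t ht.2).hasDerivWithinAt (s := Set.Iic t)
    rw [← ez ⟨ht.1.le, ht.2⟩] at this
    exact this
  · simp [msol, ← hx]

lemma exactly_of_roots {T m₀ : ℝ} (hT : 0 < T) {n : ℕ} (xs : Fin n → ℝ)
    (hinj : Function.Injective xs) (hroot : ∀ i, msol T (xs i) 0 = m₀)
    (hall : ∀ x, msol T x 0 = m₀ → ∃ i, x = xs i) : MFGExactly T m₀ n := by
  refine ⟨fun i => (zsol T (xs i), msol T (xs i)), ?_, ?_, ?_⟩
  · intro i
    refine ⟨fun t ht => (zsol_deriv T _ t ht.2).hasDerivWithinAt,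
      fun t ht => (msol_deriv T _ t ht.2).hasDerivWithinAt, ?_, hroot i⟩
    simp [zsol, msol]
  · rintro i j hij ⟨h1, -⟩
    have := h1 (Set.right_mem_Icc.2 hT.le)
    simp [zsol] at this
    exact hij (hinj this)
  · intro z m h
    obtain ⟨h1, h2⟩ := sol_unique hT h
    have h0 := h2 (Set.left_mem_Icc.2 hT.le)
    obtain ⟨i, hi⟩ := hall (m T) (by rw [← h0]; exact h.2.2.2)
    exact ⟨i, by simpa [← hi] using h1, by simpa [← hi] using h2⟩

lemma msol_neg (T x : ℝ) : msol T (-x) 0 = -msol T x 0 := by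
  simp only [msol, abs_neg]; ring

lemma msol_nonneg (T x : ℝ) (hx : 0 ≤ x) : msol T x 0 = gfun T x := by
  simp only [msol, gfun, abs_of_nonneg hx]; ring

/-- Reduction to `0 < m₀`. -/
lemma exactly_of_roots' {T m₀ : ℝ} (hT : 0 < T) {n : ℕ} (xs : Fin n → ℝ)
    (hinj : Function.Injective xs) (hroot : ∀ i, msol T (xs i) 0 = |m₀|)
    (hall : ∀ x, msol T x 0 = |m₀| → ∃ i, x = xs i) : MFGExactly T m₀ n := by
  rcases abs_choice m₀ with h | h
  · rw [h] at hroot hall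
    exact exactly_of_roots hT xs hinj hroot hall
  · rw [h] at hroot hall
    refine exactly_of_roots hT (fun i => -xs i) (fun i j hij => hinj (neg_injective hij)) ?_ ?_
    · intro i; rw [msol_neg, hroot]; ring
    · intro x hx
      obtain ⟨i, hi⟩ := hall (-x) (by rw [msol_neg, hx])
      exact ⟨i, by rw [← hi]; ring⟩

lemma gcont (T : ℝ) : Continuous (gfun T) := by unfold gfun; fun_prop

lemma pos_exists (T m : ℝ) (hm : 0 < m) (hm1 : m ≤ 1) : ∃ b, 0 < b ∧ gfun T b = m := by
  have := intermediate_value_Icc (zero_le_one' ℝ) (gcont T).continuousOn (f := gfun T)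
  obtain ⟨b, hb, hbm⟩ := this (show m ∈ Set.Icc (gfun T 0) (gfun T 1) by
    constructor
    · simp [gfun, hm.le]
    · have : gfun T 1 = 1 := by simp [gfun]
      rw [this]; exact hm1)
  refine ⟨b, lt_of_le_of_ne hb.1 ?_, hbm⟩
  rintro rfl
  simp [gfun] at hbm; linarith

lemma pos_unique {T m b c : ℝ} (hT : 0 < T) (hm : 0 < m) (hb : 0 < b) (hc : 0 < c)
    (h1 : gfun T b = m) (h2 : gfun T c = m) : b = c := by
  by_contra hne
  have hd : T ^ 2 * (b ^ 2 + b * c + c ^ 2) + (2 * T - T ^ 2) * (b + c) + (1 - 2 * T) = 0 := by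
    apply mul_left_cancel₀ (sub_ne_zero.2 hne)
    unfold gfun at h1 h2
    linear_combination h1 - h2
  have hq : 0 < T ^ 2 * b ^ 2 + (2 * T - T ^ 2) * b + (1 - 2 * T) := by
    refine pos_of_mul_pos_right (a := b) ?_ hb.le
    have : b * (T ^ 2 * b ^ 2 + (2 * T - T ^ 2) * b + (1 - 2 * T)) = m := by
      rw [← h1]; unfold gfun; ring
    linarith
  have h3 : T * (b + c - 1) + 2 < 0 := by
    have : 0 < (c * T) * (-(T * (b + c - 1) + 2)) := by nlinarith
    have := pos_of_mul_pos_right this (by positivity)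
    linarith
  have hTS : 0 < T * (b + c) := by positivity
  have hT2 : 2 < T := by nlinarith
  have h4 := mul_pos hTS (neg_pos.2 h3)
  have h5 : 0 < T ^ 2 * (b * c) := by positivity
  nlinarith

lemma g_identity {T : ℝ} (hT : 0 < T) (b : ℝ) :
    gfun T b + (2*T - 1)^2 * (T + 4) / (27*T) =
      T * (b - (2*T-1)/(3*T))^2 * (T * b + (T+4)/3) := by
  unfold gfun
  field_simp
  ring

lemma phi_mono {S T : ℝ} (hS : 1/2 ≤ S) (hST : S < T) :
    (2*S - 1)^2 * (S + 4) / (27*S) < (2*T - 1)^2 * (T + 4) / (27*T) := by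
  have hS0 : 0 < S := by linarith
  have hT0 : 0 < T := by linarith
  rw [div_lt_div_iff₀ (by positivity) (by positivity)]
  have h1 : 1/4 < S * T := by nlinarith
  have h2 : 0 < 4 * (S + T) * (S * T) + 12 * (S * T) - 4 := by nlinarith [mul_pos hS0 hT0]
  have := mul_pos (sub_pos.2 hST) h2
  nlinarith

lemma neg_three {T m b c d : ℝ} (hT : 0 < T) (hm : 0 < m) (hb : 0 < b) (hc : 0 < c) (hd : 0 < d)
    (h1 : gfun T b = -m) (h2 : gfun T c = -m) (h3 : gfun T d = -m) (hbc : b ≠ c) (hbd : b ≠ d)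
    (hcd : c ≠ d) : False := by
  have e1 : T ^ 2 * (b ^ 2 + b * c + c ^ 2) + (2 * T - T ^ 2) * (b + c) + (1 - 2 * T) = 0 := by
    apply mul_left_cancel₀ (sub_ne_zero.2 hbc)
    unfold gfun at h1 h2
    linear_combination h1 - h2
  have e2 : T ^ 2 * (b ^ 2 + b * d + d ^ 2) + (2 * T - T ^ 2) * (b + d) + (1 - 2 * T) = 0 := by
    apply mul_left_cancel₀ (sub_ne_zero.2 hbd)
    unfold gfun at h1 h3
    linear_combination h1 - h3
  have e3 : T ^ 2 * (b + c + d) + (2 * T - T ^ 2) = 0 := by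
    apply mul_left_cancel₀ (sub_ne_zero.2 hcd)
    linear_combination e1 - e2
  have e4 : T ^ 2 * (b * c * d) = - m := by
    unfold gfun at h1
    linear_combination h1 - b * e1 + (b * c) * e3
  have : 0 < T ^ 2 * (b * c * d) := by positivity
  linarith

lemma root_cases {T m x : ℝ} (hm : 0 < m) (h : msol T x 0 = m) :
    (0 < x ∧ gfun T x = m) ∨ (0 < -x ∧ gfun T (-x) = -m) := by
  rcases lt_trichotomy x 0 with hx | hx | hx
  · right
    refine ⟨by linarith, ?_⟩
    rw [← msol_nonneg T (-x) (by linarith), msol_neg, h]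
  · subst hx
    simp [msol] at h; linarith
  · left
    exact ⟨hx, by rw [← msol_nonneg T x hx.le, h]⟩

lemma root_neg {T m b : ℝ} (hb : 0 < b) (h : gfun T b = -m) : msol T (-b) 0 = m := by
  rw [msol_neg, msol_nonneg T b hb.le, h, neg_neg]

theorem stmt_8 (m₀ T Tm : ℝ) (hm₀ : m₀ ∈ Set.Icc (-1:ℝ) 1) (hm₀ne : m₀ ≠ 0)
    (hT : 0 < T)
    (hTm : Tm ∈ Set.Icc (1/2 : ℝ) 2 ∧ |m₀| = (2*Tm - 1)^2 * (Tm + 4) / (27*Tm)) :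
    (T < Tm → MFGExactly T m₀ 1) ∧
    (T = Tm → MFGExactly T m₀ 2) ∧
    (Tm < T → MFGExactly T m₀ 3) := by
  obtain ⟨⟨hl, hu⟩, hphi⟩ := hTm
  have hm : 0 < |m₀| := abs_pos.2 hm₀ne
  have hm1 : |m₀| ≤ 1 := abs_le.2 hm₀
  have hl' : 1/2 < Tm := by
    refine lt_of_le_of_ne hl ?_
    rintro rfl
    norm_num at hphi
    exact hm₀ne hphi
  obtain ⟨p, hp, hgp⟩ := pos_exists T |m₀| hm hm1
  have hpr : msol T p 0 = |m₀| := by rw [msol_nonneg T p hp.le, hgp]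
  refine ⟨fun h => ?_, fun h => ?_, fun h => ?_⟩
  · refine exactly_of_roots' hT ![p] ?_ ?_ ?_
    · exact Function.injective_of_subsingleton _
    · intro i; fin_cases i; exact hpr
    · intro x hx
      refine ⟨0, ?_⟩
      rcases root_cases hm hx with ⟨h1, h2⟩ | ⟨h1, h2⟩
      · exact pos_unique hT hm h1 hp h2 hgp
      · exfalso
        generalize -x = b at h1 h2
        rcases le_or_gt (1/2) T with h5 | h5
        · have h6 := phi_mono h5 h
          have h7 := g_identity hT b
          have : 0 ≤ T * (b - (2*T-1)/(3*T))^2 * (T * b + (T+4)/3) := by positivity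
          linarith
        · have : 0 ≤ gfun T b := by
            have i1 : 0 ≤ 2 * T - T^2 := by nlinarith
            have i2 : 0 ≤ 1 - 2 * T := by linarith
            unfold gfun
            positivity
          linarith
  · subst h
    have hs : 0 < (2*T-1)/(3*T) := div_pos (by linarith) (by linarith)
    have hgs : gfun T ((2*T-1)/(3*T)) = -|m₀| := by
      have := g_identity hT ((2*T-1)/(3*T))
      rw [← hphi] at this
      simp at this; linarith
    refine exactly_of_roots' hT ![p, -((2*T-1)/(3*T))] ?_ ?_ ?_
    · intro i j hij
      fin_cases i <;> fin_cases j <;> simp at hij ⊢ <;> linarith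
    · intro i; fin_cases i
      · exact hpr
      · exact root_neg hs hgs
    · intro x hx
      rcases root_cases hm hx with ⟨h1, h2⟩ | ⟨h1, h2⟩
      · exact ⟨0, pos_unique hT hm h1 hp h2 hgp⟩
      · refine ⟨1, ?_⟩
        have h7 := g_identity hT (-x)
        rw [← hphi, h2] at h7
        have h8 : 0 < T * (-x) + (T+4)/3 := by positivity
        have h9 : T * (-x - (2*T-1)/(3*T))^2 = 0 := by
          have : T * (-x - (2*T-1)/(3*T))^2 * (T * (-x) + (T+4)/3) = 0 := by linarith
          exact (mul_eq_zero.1 this).resolve_right h8.ne'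
        have h10 := pow_eq_zero_iff (two_ne_zero) |>.1 ((mul_eq_zero.1 h9).resolve_left hT.ne')
        simp only [Matrix.cons_val_one, Matrix.cons_val_zero, Matrix.cons_val_fin_one]
        linarith
  · have hs : 0 < (2*T-1)/(3*T) := div_pos (by linarith) (by linarith)
    have hs1 : (2*T-1)/(3*T) < 1 := by rw [div_lt_one (by linarith)]; linarith
    have hgs : gfun T ((2*T-1)/(3*T)) < -|m₀| := by
      have := g_identity hT ((2*T-1)/(3*T))
      have h6 := phi_mono hl h
      simp only [sub_self] at this
      norm_num at this
      linarith
    set s := (2*T-1)/(3*T) with hsdef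
    have hg0 : gfun T 0 = 0 := by simp [gfun]
    have hg1 : gfun T 1 = 1 := by simp [gfun]
    obtain ⟨b, hb, hgb⟩ := intermediate_value_Ioo' hs.le (gcont T).continuousOn
      (show -|m₀| ∈ Set.Ioo (gfun T s) (gfun T 0) from ⟨hgs, by linarith⟩)
    obtain ⟨c, hc, hgc⟩ := intermediate_value_Ioo hs1.le (gcont T).continuousOn
      (show -|m₀| ∈ Set.Ioo (gfun T s) (gfun T 1) from ⟨hgs, by linarith⟩)
    have hb0 := hb.1
    have hbc : b < c := hb.2.trans hc.1
    have hc0 : 0 < c := hb0.trans hbc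
    refine exactly_of_roots' hT ![p, -b, -c] ?_ ?_ ?_
    · intro i j hij
      fin_cases i <;> fin_cases j <;> simp at hij ⊢ <;> linarith
    · intro i; fin_cases i
      · exact hpr
      · exact root_neg hb0 hgb
      · exact root_neg hc0 hgc
    · intro x hx
      rcases root_cases hm hx with ⟨h1, h2⟩ | ⟨h1, h2⟩
      · exact ⟨0, pos_unique hT hm h1 hp h2 hgp⟩
      · by_cases e1 : b = -x
        · exact ⟨1, by simp [e1]⟩
        by_cases e2 : c = -x
        · exact ⟨2, by simp [e2]⟩
        exact (neg_three hT hm hb0 hc0 h1 hgb hgc h2 hbc.ne e1 e2).elim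
end

section
/- Let m₀ = 0 and T > 0, and consider the mean field game system: pairs (z,m) of differentiable functions [0,T] → ℝ with z′(t) = z(t)|z(t)|/2, m′(t) = −m(t)|z(t)| + z(t), z(T) = 2m(T), m(0) = 0. If T ≤ 1/2 the only solution is the identically-zero pair. If T > 1/2 there are exactly three distinct solutions: the identically-zero pair, and two pairs (z₊,m₊) and (z₋,m₋) satisfying m₊(t) = −m₋(t) > 0 for every t ∈ (0,T]. -/
lemma lin_zero {T M : ℝ} {y p : ℝ → ℝ} (hp : ∀ t ∈ Set.Icc (0:ℝ) T, |p t| ≤ M)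
    (hy : ∀ t ∈ Set.Icc (0:ℝ) T, HasDerivWithinAt y (p t * y t) (Set.Icc (0:ℝ) T) t)
    (h0 : y 0 = 0) : ∀ t ∈ Set.Icc (0:ℝ) T, y t = 0 := by
  refine eq_zero_of_abs_deriv_le_mul_abs_self_of_eq_zero_right (f' := fun t => p t * y t) (K := M)
    (fun t ht => (hy t ht).continuousWithinAt) ?_ h0 ?_
  · intro t ht
    exact (hy t ⟨ht.1, ht.2.le⟩).mono_of_mem_nhdsWithin (Icc_mem_nhdsGE_of_mem ht)
  · intro t ht
    have := hp t ⟨ht.1, ht.2.le⟩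
    rw [Real.norm_eq_abs, Real.norm_eq_abs, abs_mul]
    exact mul_le_mul_of_nonneg_right this (abs_nonneg _)

lemma sol_bdd {T : ℝ} {z m : ℝ → ℝ} (h : MFGSol T 0 z m) :
    ∃ M, ∀ t ∈ Set.Icc (0:ℝ) T, |z t| ≤ M := by
  have hc : ContinuousOn z (Set.Icc (0:ℝ) T) := fun t ht => (h.1 t ht).continuousWithinAt
  obtain ⟨M, hM⟩ := isCompact_Icc.exists_bound_of_continuousOn hc
  exact ⟨M, hM⟩

lemma sol_zero {T : ℝ} {z m : ℝ → ℝ} (h : MFGSol T 0 z m) (h0 : z 0 = 0) :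
    Set.EqOn z (fun _ => 0) (Set.Icc 0 T) ∧ Set.EqOn m (fun _ => 0) (Set.Icc 0 T) := by
  obtain ⟨M, hM⟩ := sol_bdd h
  have hz : ∀ t ∈ Set.Icc (0:ℝ) T, z t = 0 := by
    refine lin_zero (p := fun t => |z t| / 2) (M := M / 2) ?_ ?_ h0
    · intro t ht
      have := hM t ht
      rw [abs_div, abs_abs, abs_two]; linarith
    · intro t ht
      refine HasDerivWithinAt.congr_deriv (h.1 t ht) ?_; ring
  refine ⟨hz, ?_⟩
  refine lin_zero (p := fun t => 0) (M := 0) (by simp) ?_ h.2.2.2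
  intro t ht
  refine HasDerivWithinAt.congr_deriv (h.2.1 t ht) ?_
  simp [hz t ht]

lemma sol_neg {T : ℝ} {z m : ℝ → ℝ} (h : MFGSol T 0 z m) :
    MFGSol T 0 (fun t => - z t) (fun t => - m t) := by
  obtain ⟨h1, h2, h3, h4⟩ := h
  refine ⟨fun t ht => ?_, fun t ht => ?_, ?_, ?_⟩
  · refine HasDerivWithinAt.congr_deriv ((h1 t ht).fun_neg) ?_
    rw [abs_neg]; ring
  · refine HasDerivWithinAt.congr_deriv ((h2 t ht).fun_neg) ?_
    rw [abs_neg]; ring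
  · simp only [h3]; ring
  · simp [h4]

lemma sol_nonneg {T : ℝ} {z m : ℝ → ℝ} (h : MFGSol T 0 z m) (h0 : 0 < z 0) :
    ∀ t ∈ Set.Icc (0:ℝ) T, 0 ≤ z t := by
  intro t ht
  by_contra hneg
  push Not at hneg
  have hc : ContinuousOn z (Set.Icc (0:ℝ) T) := fun t ht => (h.1 t ht).continuousWithinAt
  have hsub : Set.Icc 0 t ⊆ Set.Icc (0:ℝ) T := Set.Icc_subset_Icc_right ht.2
  obtain ⟨s, hs, hs0⟩ := intermediate_value_Icc' ht.1 (hc.mono hsub) ⟨hneg.le, h0.le⟩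
  have hmono : MonotoneOn (fun t => z t ^ 2) (Set.Icc (0:ℝ) T) := by
    refine monotoneOn_of_hasDerivWithinAt_nonneg (convex_Icc 0 T) (hc.pow 2)
      (f' := fun t => z t ^ 2 * |z t|) ?_ ?_
    · intro x hx
      have := ((h.1 x (interior_subset hx)).fun_pow 2).mono interior_subset
      refine HasDerivWithinAt.congr_deriv (this) ?_
      simp; ring
    · intro x hx
      positivity
  have := hmono ⟨le_rfl, ht.1.trans ht.2⟩ (hsub hs) hs.1
  simp only [hs0] at this
  nlinarith

lemma sol_pos {T : ℝ} (hT : 0 < T) {z m : ℝ → ℝ} (h : MFGSol T 0 z m) (h0 : 0 < z 0) :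
    ∃ s, 0 < s ∧ (2 * T - 1) * s ^ 2 + (T ^ 2 - 2 * T) * s - T ^ 2 = 0 ∧
      ∀ t ∈ Set.Icc (0:ℝ) T, z t = 2 / (s + T - t) ∧ m t = 1 - ((s + T - t) / (s + T)) ^ 2 := by
  obtain ⟨M, hM⟩ := sol_bdd h
  have hnn := sol_nonneg h h0
  set a := 2 / z 0 with ha
  have hapos : 0 < a := by positivity
  have hmem : T ∈ Set.Icc (0:ℝ) T := ⟨hT.le, le_rfl⟩
  have hlin : ∀ t : ℝ, HasDerivWithinAt (fun t : ℝ => a - t) (-1) (Set.Icc (0:ℝ) T) t := by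
    intro t
    simpa using (hasDerivWithinAt_id t (Set.Icc (0:ℝ) T)).const_sub a
  have hy : ∀ t ∈ Set.Icc (0:ℝ) T, (a - t) * z t - 2 = 0 := by
    refine lin_zero (y := fun t => (a - t) * z t - 2) (p := fun t => z t / 2) (M := M / 2) ?_ ?_ ?_
    · intro t ht
      have := hM t ht
      rw [abs_div, abs_two]; linarith
    · intro t ht
      refine HasDerivWithinAt.congr_deriv (((hlin t).fun_mul (h.1 t ht)).sub_const 2) ?_
      rw [abs_of_nonneg (hnn t ht)]; ring
    · simp [ha, h0.ne']
  have hat : ∀ t ∈ Set.Icc (0:ℝ) T, 0 < a - t := by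
    intro t ht
    by_contra hcon
    nlinarith [hy t ht, hnn t ht]
  have hz : ∀ t ∈ Set.Icc (0:ℝ) T, z t = 2 / (a - t) := by
    intro t ht
    rw [eq_div_iff (hat t ht).ne']
    linarith [hy t ht]
  have hm : ∀ t ∈ Set.Icc (0:ℝ) T, m t - (1 - ((a - t) / a) ^ 2) = 0 := by
    refine lin_zero (y := fun t => m t - (1 - ((a - t) / a) ^ 2)) (p := fun t => - z t)
      (M := M) ?_ ?_ ?_
    · intro t ht
      rw [abs_neg]; exact hM t ht
    · intro t ht
      refine HasDerivWithinAt.congr_deriv ((h.2.1 t ht).fun_sub ((((hlin t).div_const a).fun_pow 2).const_sub 1)) ?_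
      have h1 := hat t ht
      rw [abs_of_nonneg (hnn t ht), hz t ht]
      simp only [Nat.cast_ofNat, Nat.add_one_sub_one, pow_one, Nat.reduceSub]
      field_simp
      ring
    · simp [h.2.2.2, hapos.ne']
  refine ⟨a - T, hat T hmem, ?_, ?_⟩
  · have h3 := h.2.2.1
    have h1 := hat T hmem
    have h4 : m T = 1 - ((a - T) / a) ^ 2 := by linarith [hm T hmem]
    rw [hz T hmem, h4] at h3
    field_simp at h3
    linarith
  · intro t ht
    rw [sub_add_cancel]
    exact ⟨hz t ht, by linarith [hm t ht]⟩

lemma sol_mk {T s : ℝ} (hT : 0 < T) (hs : 0 < s)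
    (hq : (2 * T - 1) * s ^ 2 + (T ^ 2 - 2 * T) * s - T ^ 2 = 0) :
    MFGSol T 0 (fun t => 2 / (s + T - t)) (fun t => 1 - ((s + T - t) / (s + T)) ^ 2) := by
  have hlin : ∀ t : ℝ, HasDerivWithinAt (fun t : ℝ => s + T - t) (-1) (Set.Icc (0:ℝ) T) t := by
    intro t
    simpa using (hasDerivWithinAt_id t (Set.Icc (0:ℝ) T)).const_sub (s + T)
  have hpos : ∀ t ∈ Set.Icc (0:ℝ) T, 0 < s + T - t := fun t ht => by linarith [ht.2]
  refine ⟨fun t ht => ?_, fun t ht => ?_, ?_, ?_⟩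
  · have h1 := hpos t ht
    refine HasDerivWithinAt.congr_deriv ((hasDerivWithinAt_const t (Set.Icc (0:ℝ) T) (2:ℝ)).fun_div (hlin t) h1.ne') ?_
    rw [abs_of_pos (by positivity)]
    field_simp
    ring
  · have h1 := hpos t ht
    refine HasDerivWithinAt.congr_deriv ((((hlin t).div_const (s + T)).fun_pow 2).const_sub 1) ?_
    rw [abs_of_pos (by positivity)]
    simp only [Nat.cast_ofNat, Nat.add_one_sub_one, pow_one, Nat.reduceSub]
    field_simp
    ring
  · simp only [add_sub_cancel_right]
    field_simp
    linarith
  · have : s + T ≠ 0 := by positivity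
    simp [this]

lemma root_ex {T : ℝ} (hT : 1 / 2 < T) :
    ∃ s, 0 < s ∧ (2 * T - 1) * s ^ 2 + (T ^ 2 - 2 * T) * s - T ^ 2 = 0 := by
  have hA : 0 < 2 * T - 1 := by linarith
  have hT2 : 0 < T ^ 2 := by positivity
  have hD : 0 < (T ^ 2 - 2 * T) ^ 2 + 4 * (2 * T - 1) * T ^ 2 := by positivity
  set r := √((T ^ 2 - 2 * T) ^ 2 + 4 * (2 * T - 1) * T ^ 2) with hr
  have hr2 : r ^ 2 = (T ^ 2 - 2 * T) ^ 2 + 4 * (2 * T - 1) * T ^ 2 := Real.sq_sqrt hD.le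
  have hrB : T ^ 2 - 2 * T < r := by
    apply Real.lt_sqrt_of_sq_lt
    have : 0 < 4 * (2 * T - 1) * T ^ 2 := by positivity
    linarith
  refine ⟨(r - (T ^ 2 - 2 * T)) / (2 * (2 * T - 1)), div_pos (by linarith) (by linarith), ?_⟩
  have := hA.ne'
  field_simp
  linear_combination hr2

lemma root_unique {T s u : ℝ} (hT : 1 / 2 < T) (hs : 0 < s) (hu : 0 < u)
    (hq : (2 * T - 1) * s ^ 2 + (T ^ 2 - 2 * T) * s - T ^ 2 = 0)
    (hq' : (2 * T - 1) * u ^ 2 + (T ^ 2 - 2 * T) * u - T ^ 2 = 0) : s = u := by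
  have h1 : 0 < (2 * T - 1) * s + (T ^ 2 - 2 * T) := by
    have : 0 < T ^ 2 := by positivity
    by_contra hcon
    nlinarith
  have h2 : 0 < (2 * T - 1) * u := mul_pos (by linarith) hu
  have h3 : (s - u) * ((2 * T - 1) * s + (T ^ 2 - 2 * T) + (2 * T - 1) * u) = 0 := by
    linear_combination hq - hq'
  rcases mul_eq_zero.mp h3 with h | h <;> linarith

lemma root_none {T s : ℝ} (hT0 : 0 < T) (hT : T ≤ 1 / 2) (hs : 0 < s)
    (hq : (2 * T - 1) * s ^ 2 + (T ^ 2 - 2 * T) * s - T ^ 2 = 0) : False := by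
  have h1 : (2 * T - 1) * s ^ 2 ≤ 0 :=
    mul_nonpos_of_nonpos_of_nonneg (by linarith) (by positivity)
  have h2 : (T ^ 2 - 2 * T) * s < 0 := mul_neg_of_neg_of_pos (by nlinarith) hs
  have h3 : 0 < T ^ 2 := by positivity
  linarith

/-- For `m₀ = 0` and `T > 0`: if `T ≤ 1/2` the only solution of the mean field
game system is the zero pair; if `T > 1/2` there are exactly three distinct
solutions: the zero pair, and two pairs `(z₊,m₊)`, `(z₋,m₋)` with
`m₊(t) = −m₋(t) > 0` for every `t ∈ (0,T]`. -/
theorem stmt_9 (T : ℝ) (hT : 0 < T) :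
    (T ≤ 1/2 →
      MFGSol T 0 (fun _ => 0) (fun _ => 0) ∧
      ∀ z m : ℝ → ℝ, MFGSol T 0 z m →
        Set.EqOn z (fun _ => 0) (Set.Icc 0 T) ∧
        Set.EqOn m (fun _ => 0) (Set.Icc 0 T)) ∧
    (1/2 < T →
      MFGSol T 0 (fun _ => 0) (fun _ => 0) ∧
      ∃ zp mp zm mm : ℝ → ℝ,
        MFGSol T 0 zp mp ∧ MFGSol T 0 zm mm ∧
        (∀ t ∈ Set.Ioc (0:ℝ) T, mp t = - mm t ∧ 0 < mp t) ∧
        (∀ z m : ℝ → ℝ, MFGSol T 0 z m →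
          (Set.EqOn z (fun _ => 0) (Set.Icc 0 T) ∧
             Set.EqOn m (fun _ => 0) (Set.Icc 0 T)) ∨
          (Set.EqOn z zp (Set.Icc 0 T) ∧ Set.EqOn m mp (Set.Icc 0 T)) ∨
          (Set.EqOn z zm (Set.Icc 0 T) ∧ Set.EqOn m mm (Set.Icc 0 T)))) := by
  have hzero : MFGSol T 0 (fun _ => 0) (fun _ => 0) := by
    refine ⟨fun t ht => ?_, fun t ht => ?_, by simp, rfl⟩
    · simpa using hasDerivWithinAt_const t (Set.Icc (0:ℝ) T) (0:ℝ)
    · simpa using hasDerivWithinAt_const t (Set.Icc (0:ℝ) T) (0:ℝ)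
  refine ⟨fun hle => ⟨hzero, fun z m h => ?_⟩, fun hlt => ⟨hzero, ?_⟩⟩
  · rcases lt_trichotomy (z 0) 0 with h0 | h0 | h0
    · obtain ⟨s, hs, hq, -⟩ := sol_pos hT (sol_neg h) (by linarith)
      exact (root_none hT hle hs hq).elim
    · exact sol_zero h h0
    · obtain ⟨s, hs, hq, -⟩ := sol_pos hT h h0
      exact (root_none hT hle hs hq).elim
  · obtain ⟨s, hs, hq⟩ := root_ex hlt
    have hsol := sol_mk hT hs hq
    refine ⟨_, _, _, _, hsol, sol_neg hsol, fun t ht => ⟨by simp, ?_⟩, fun z m h => ?_⟩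
    · have h1 : (s + T - t) / (s + T) < 1 := by
        rw [div_lt_one (by linarith)]; linarith [ht.1]
      have h2 : 0 ≤ (s + T - t) / (s + T) := div_nonneg (by linarith [ht.2]) (by linarith)
      show 0 < 1 - ((s + T - t) / (s + T)) ^ 2
      nlinarith
    · rcases lt_trichotomy (z 0) 0 with h0 | h0 | h0
      · obtain ⟨u, hu, hq', hf⟩ := sol_pos hT (sol_neg h) (by linarith)
        obtain rfl := root_unique hlt hs hu hq hq'
        refine Or.inr (Or.inr ⟨fun t ht => ?_, fun t ht => ?_⟩)
        · have := (hf t ht).1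
          simp only at this ⊢
          linarith
        · have := (hf t ht).2
          simp only at this ⊢
          linarith
      · exact Or.inl (sol_zero h h0)
      · obtain ⟨u, hu, hq', hf⟩ := sol_pos hT h h0
        obtain rfl := root_unique hlt hs hu hq hq'
        exact Or.inr (Or.inl ⟨fun t ht => (hf t ht).1, fun t ht => (hf t ht).2⟩)
end

section
/- Fix N ≥ 1, T > 0, and let S_N = {0, 1/N, 2/N, …, 1}. Suppose V : [0,T] × S_N → ℝ is differentiable in t and satisfies, for every μ ∈ S_N and t ∈ [0,T]: −(d/dt)V(t,μ) + ((V(t,1−μ) − V(t,μ))⁻)²/2 = Nμ · (V(t,1−μ) − V(t,μ))⁻ · (V(t,μ−1/N) − V(t,μ)) + N(1−μ) · (V(t,μ+1/N) − V(t,1−μ−1/N))⁻ · (V(t,μ+1/N) − V(t,μ)), where terms carrying the coefficient Nμ are omitted when μ = 0 and terms carrying N(1−μ) are omitted when μ = 1. If |V(T,μ)| ≤ 1 for all μ ∈ S_N, then |V(t,μ)| ≤ 1 for all t ∈ [0,T] and all μ ∈ S_N. -/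
/-- The grid `S_N = {0, 1/N, 2/N, …, 1}` of possible empirical fractions. -/
def gridSN (N : ℕ) : Set ℝ := {μ : ℝ | ∃ k : ℕ, k ≤ N ∧ μ = (k : ℝ) / N}

/-- `V` solves, on `[0,T] × S_N`, the closed Hamilton–Jacobi–Bellman ODE system
`−(d/dt)V(t,μ) + ((V(t,1−μ) − V(t,μ))⁻)²/2
  = Nμ·(V(t,1−μ) − V(t,μ))⁻·(V(t,μ−1/N) − V(t,μ))
    + N(1−μ)·(V(t,μ+1/N) − V(t,1−μ−1/N))⁻·(V(t,μ+1/N) − V(t,μ))`,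
with the `Nμ`-terms omitted at `μ = 0` and the `N(1−μ)`-terms omitted at `μ = 1`;
here `p⁻ = max (−p) 0` is the negative part. -/
def HJBSol (N : ℕ) (T : ℝ) (V : ℝ → ℝ → ℝ) : Prop :=
  ∀ μ ∈ gridSN N, ∀ t ∈ Set.Icc (0:ℝ) T,
    HasDerivWithinAt (fun s : ℝ => V s μ)
      ((max (-(V t (1 - μ) - V t μ)) 0)^2 / 2
        - (if μ = 0 then 0 else
            (N : ℝ) * μ * (max (-(V t (1 - μ) - V t μ)) 0)
              * (V t (μ - 1/(N : ℝ)) - V t μ))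
        - (if μ = 1 then 0 else
            (N : ℝ) * (1 - μ)
              * (max (-(V t (μ + 1/(N : ℝ)) - V t (1 - μ - 1/(N : ℝ)))) 0)
              * (V t (μ + 1/(N : ℝ)) - V t μ)))
      (Set.Icc (0:ℝ) T) t

/-- Maximum principle for finite families, backward in time. -/
theorem aux_max (N : ℕ) (T : ℝ) (hT : 0 < T) (f d : ℕ → ℝ → ℝ)
    (hf : ∀ k ≤ N, ∀ t ∈ Set.Icc (0:ℝ) T, HasDerivWithinAt (f k) (d k t) (Set.Icc (0:ℝ) T) t)
    (hd : ∀ k ≤ N, ∀ t ∈ Set.Icc (0:ℝ) T, (∀ j ≤ N, f j t ≤ f k t) → 0 ≤ d k t)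
    (h1 : ∀ k ≤ N, f k T ≤ 1) :
    ∀ k ≤ N, ∀ t ∈ Set.Icc (0:ℝ) T, f k t ≤ 1 := by
  have key : ∀ ε > 0, ∀ k ≤ N, ∀ t ∈ Set.Icc (0:ℝ) T, f k t + ε * (t - T) ≤ 1 := by
    intro ε hε
    have hder : ∀ k ≤ N, ∀ t ∈ Set.Icc (0:ℝ) T,
        HasDerivWithinAt (fun s => f k s + ε * (s - T)) (d k t + ε) (Set.Icc (0:ℝ) T) t := by
      intro k hk t ht
      have h2 : HasDerivWithinAt (fun s : ℝ => ε * (s - T)) (ε * 1) (Set.Icc (0:ℝ) T) t :=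
        ((hasDerivWithinAt_id t _).sub_const T).const_mul ε
      rw [mul_one] at h2
      exact (hf k hk t ht).fun_add h2
    have hex : ∀ k : ℕ, ∃ s ∈ Set.Icc (0:ℝ) T, k ≤ N →
        ∀ t ∈ Set.Icc (0:ℝ) T, f k t + ε * (t - T) ≤ f k s + ε * (s - T) := by
      intro k
      by_cases hk : k ≤ N
      · obtain ⟨s, hs, hm⟩ := (isCompact_Icc (a := (0:ℝ)) (b := T)).exists_isMaxOn
          ⟨0, by simp [hT.le]⟩ (fun t ht => (hder k hk t ht).continuousWithinAt)
        exact ⟨s, hs, fun _ t ht => hm ht⟩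
      · exact ⟨0, by simp [hT.le], fun h => absurd h hk⟩
    choose s hs hmax using hex
    obtain ⟨m, hm, hmm⟩ := Finset.exists_max_image (Finset.range (N+1))
      (fun k => f k (s k) + ε * (s k - T)) ⟨0, by simp⟩
    have hmN : m ≤ N := by simpa [Nat.lt_succ_iff] using hm
    have hall : ∀ k ≤ N, ∀ t ∈ Set.Icc (0:ℝ) T,
        f k t + ε * (t - T) ≤ f m (s m) + ε * (s m - T) := fun k hk t ht =>
      (hmax k hk t ht).trans (hmm k (by simp; omega))
    have hsT : s m = T := by
      by_contra hne
      have hlt : s m < T := lt_of_le_of_ne (hs m).2 hne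
      have hloc : IsLocalMaxOn (fun t => f m t + ε * (t - T)) (Set.Icc (0:ℝ) T) (s m) :=
        IsMaxOn.localize (fun t ht => hall m hmN t ht)
      have h := hloc.hasFDerivWithinAt_nonpos (hder m hmN (s m) (hs m)).hasFDerivWithinAt
        (y := T - s m) (sub_mem_posTangentConeAt_of_segment_subset
          ((convex_Icc 0 T).segment_subset (hs m) ⟨hT.le, le_rfl⟩))
      have h0 := hd m hmN (s m) (hs m) (fun j hj => by
        have := hall j hj (s m) (hs m); linarith)
      simp at h
      nlinarith
    intro k hk t ht
    have h3 := hall k hk t ht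
    have h4 := h1 m hmN
    rw [hsT] at h3
    linarith
  intro k hk t ht
  by_contra hcon
  push Not at hcon
  have h5 := key ((f k t - 1) / (2 * T)) (div_pos (by linarith) (by linarith)) k hk t ht
  have h6 : (f k t - 1) / (2 * T) * (t - T) ≥ - ((f k t - 1) / 2) := by
    rw [div_mul_eq_mul_div, ge_iff_le, le_div_iff₀ (by linarith)]
    nlinarith [ht.1]
  linarith

/-- If `V` solves the HJB ODE system on `[0,T] × S_N` and `|V(T,μ)| ≤ 1` on the
grid, then `|V(t,μ)| ≤ 1` for all `t ∈ [0,T]` and all `μ ∈ S_N`. -/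
theorem stmt_11 (N : ℕ) (hN : 1 ≤ N) (T : ℝ) (hT : 0 < T) (V : ℝ → ℝ → ℝ)
    (hV : HJBSol N T V) (hterm : ∀ μ ∈ gridSN N, |V T μ| ≤ 1) :
    ∀ t ∈ Set.Icc (0:ℝ) T, ∀ μ ∈ gridSN N, |V t μ| ≤ 1 := by
  have hN0 : (0:ℝ) < N := by exact_mod_cast hN
  have hmem : ∀ k ≤ N, (k:ℝ) / N ∈ gridSN N := fun k hk => ⟨k, hk, rfl⟩
  have hrefl : ∀ μ ∈ gridSN N, 1 - μ ∈ gridSN N := by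
    rintro _ ⟨k, hk, rfl⟩
    refine ⟨N - k, by omega, ?_⟩
    rw [Nat.cast_sub hk]; field_simp
  have hup : ∀ μ ∈ gridSN N, μ ≠ 1 → μ + 1/(N:ℝ) ∈ gridSN N := by
    rintro _ ⟨k, hk, rfl⟩ hne
    have : k ≠ N := by rintro rfl; exact hne (div_self hN0.ne')
    refine ⟨k + 1, by omega, ?_⟩
    push_cast; field_simp
  have hdown : ∀ μ ∈ gridSN N, μ ≠ 0 → μ - 1/(N:ℝ) ∈ gridSN N := by
    rintro _ ⟨k, hk, rfl⟩ hne
    have : k ≠ 0 := by rintro rfl; simp at hne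
    refine ⟨k - 1, by omega, ?_⟩
    rw [Nat.cast_sub (by omega)]; push_cast; field_simp
  have h01 : ∀ μ ∈ gridSN N, 0 ≤ μ ∧ μ ≤ 1 := by
    rintro _ ⟨k, hk, rfl⟩
    exact ⟨by positivity, (div_le_one hN0).2 (by exact_mod_cast hk)⟩
  have hA := aux_max N T hT (fun k t => V t ((k:ℝ)/N)) _
    (fun k hk t ht => hV _ (hmem k hk) t ht) (by
      intro k hk t ht hmax
      have hg := hmem k hk
      generalize (k:ℝ)/N = μ at *
      have hmax' : ∀ ν ∈ gridSN N, V t ν ≤ V t μ := by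
        rintro _ ⟨j, hj, rfl⟩; exact hmax j hj
      have hb := h01 μ hg
      have e1 : (if μ = 0 then 0 else
            (N : ℝ) * μ * (max (-(V t (1 - μ) - V t μ)) 0)
              * (V t (μ - 1/(N : ℝ)) - V t μ)) ≤ 0 := by
        split_ifs with h
        · exact le_rfl
        · exact mul_nonpos_of_nonneg_of_nonpos
            (mul_nonneg (mul_nonneg hN0.le hb.1) (le_max_right _ _))
            (sub_nonpos.2 (hmax' _ (hdown μ hg h)))
      have e2 : (if μ = 1 then 0 else
            (N : ℝ) * (1 - μ)
              * (max (-(V t (μ + 1/(N : ℝ)) - V t (1 - μ - 1/(N : ℝ)))) 0)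
              * (V t (μ + 1/(N : ℝ)) - V t μ)) ≤ 0 := by
        split_ifs with h
        · exact le_rfl
        · exact mul_nonpos_of_nonneg_of_nonpos
            (mul_nonneg (mul_nonneg hN0.le (by linarith)) (le_max_right _ _))
            (sub_nonpos.2 (hmax' _ (hup μ hg h)))
      have e0 : 0 ≤ (max (-(V t (1 - μ) - V t μ)) 0)^2 / 2 := by positivity
      linarith) (fun k hk => (abs_le.1 (hterm _ (hmem k hk))).2)
  have hB := aux_max N T hT (fun k t => - V t ((k:ℝ)/N)) _
    (fun k hk t ht => (hV _ (hmem k hk) t ht).fun_neg) (by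
      intro k hk t ht hmax
      have hg := hmem k hk
      generalize (k:ℝ)/N = μ at *
      have hmin : ∀ ν ∈ gridSN N, V t μ ≤ V t ν := by
        rintro _ ⟨j, hj, rfl⟩
        have := hmax j hj
        simp only [neg_le_neg_iff] at this
        exact this
      have hb := h01 μ hg
      have hz : max (-(V t (1 - μ) - V t μ)) 0 = 0 :=
        max_eq_right (by have := hmin _ (hrefl μ hg); linarith)
      have e2 : 0 ≤ (if μ = 1 then 0 else
            (N : ℝ) * (1 - μ)
              * (max (-(V t (μ + 1/(N : ℝ)) - V t (1 - μ - 1/(N : ℝ)))) 0)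
              * (V t (μ + 1/(N : ℝ)) - V t μ)) := by
        split_ifs with h
        · exact le_rfl
        · exact mul_nonneg
            (mul_nonneg (mul_nonneg hN0.le (by linarith)) (le_max_right _ _))
            (sub_nonneg.2 (hmin _ (hup μ hg h)))
      have e1 : (if μ = 0 then 0 else
            (N : ℝ) * μ * (max (-(V t (1 - μ) - V t μ)) 0)
              * (V t (μ - 1/(N : ℝ)) - V t μ)) = 0 := by
        rw [hz]; simp
      rw [e1, hz]
      linarith) (fun k hk => by
        have := (abs_le.1 (hterm _ (hmem k hk))).1
        show - V T ((k:ℝ)/N) ≤ 1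
        linarith)
  rintro t ht _ ⟨k, hk, rfl⟩
  have a := hA k hk t ht
  have b := hB k hk t ht
  exact abs_le.2 ⟨by linarith, a⟩
end

section
/- Fix N ≥ 1 and T > 0, and let S_N = {0, 1/N, 2/N, …, 1}. Then there exists a unique function V : [0,T] × S_N → ℝ, differentiable in t, satisfying for every μ ∈ S_N and t ∈ [0,T]: −(d/dt)V(t,μ) + ((V(t,1−μ) − V(t,μ))⁻)²/2 = Nμ · (V(t,1−μ) − V(t,μ))⁻ · (V(t,μ−1/N) − V(t,μ)) + N(1−μ) · (V(t,μ+1/N) − V(t,1−μ−1/N))⁻ · (V(t,μ+1/N) − V(t,μ)), with terminal condition V(T,μ) = −(2μ−1) (terms carrying the coefficient Nμ are omitted when μ = 0 and terms carrying N(1−μ) when μ = 1); moreover this solution satisfies |V(t,μ)| ≤ 1 for all t and μ. -/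
open Set

/-- Right-hand side of the system for a grid function `v`. -/
noncomputable def hjbRhs (N : ℕ) (v : ℝ → ℝ) (μ : ℝ) : ℝ :=
  (max (-(v (1 - μ) - v μ)) 0)^2 / 2
        - (if μ = 0 then 0 else
            (N : ℝ) * μ * (max (-(v (1 - μ) - v μ)) 0)
              * (v (μ - 1/(N : ℝ)) - v μ))
        - (if μ = 1 then 0 else
            (N : ℝ) * (1 - μ)
              * (max (-(v (μ + 1/(N : ℝ)) - v (1 - μ - 1/(N : ℝ)))) 0)
              * (v (μ + 1/(N : ℝ)) - v μ))

theorem hjbRhs_congr (N : ℕ) (hN : 1 ≤ N) (v w : ℝ → ℝ) (h : ∀ μ ∈ gridSN N, v μ = w μ)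
    (μ : ℝ) (hμ : μ ∈ gridSN N) : hjbRhs N v μ = hjbRhs N w μ := by
  have hN0 : (N : ℝ) ≠ 0 := by positivity
  obtain ⟨k, hk, rfl⟩ := hμ
  have e0 := h _ ⟨k, hk, rfl⟩
  have e1 : v (1 - (k:ℝ)/N) = w (1 - (k:ℝ)/N) := by
    apply h
    refine ⟨N - k, by omega, ?_⟩
    rw [Nat.cast_sub hk]; field_simp
  have e2 : (k:ℝ)/N ≠ 0 → v ((k:ℝ)/N - 1/N) = w ((k:ℝ)/N - 1/N) := by
    intro hne
    have hk0 : 1 ≤ k := by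
      rcases Nat.eq_zero_or_pos k with h0 | h0
      · subst h0; simp at hne
      · exact h0
    apply h
    refine ⟨k - 1, by omega, ?_⟩
    rw [Nat.cast_sub hk0]; push_cast; field_simp
  have hlt : (k:ℝ)/N ≠ 1 → k + 1 ≤ N := by
    intro hne
    rcases Nat.lt_or_ge k N with h0 | h0
    · exact h0
    · have : k = N := by omega
      subst this
      exact absurd (div_self hN0) hne
  have e3 : (k:ℝ)/N ≠ 1 → v ((k:ℝ)/N + 1/N) = w ((k:ℝ)/N + 1/N) := by
    intro hne
    apply h
    refine ⟨k + 1, hlt hne, ?_⟩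
    push_cast; field_simp
  have e4 : (k:ℝ)/N ≠ 1 → v (1 - (k:ℝ)/N - 1/N) = w (1 - (k:ℝ)/N - 1/N) := by
    intro hne
    apply h
    refine ⟨N - (k + 1), by omega, ?_⟩
    rw [Nat.cast_sub (hlt hne)]; push_cast; field_simp; ring
  unfold hjbRhs
  rw [e0, e1]
  congr 1
  · congr 1
    split_ifs with c
    · rfl
    · rw [e2 c]
  · split_ifs with c
    · rfl
    · rw [e3 c, e4 c]

theorem hjbRhs_nonneg (N : ℕ) (v : ℝ → ℝ) (μ : ℝ) (h0 : 0 ≤ μ) (h1 : μ ≤ 1)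
    (hv : ∀ x, v x ≤ v μ) : 0 ≤ hjbRhs N v μ := by
  have a1 : (if μ = 0 then 0 else (N : ℝ) * μ * (max (-(v (1 - μ) - v μ)) 0)
              * (v (μ - 1/(N : ℝ)) - v μ)) ≤ 0 := by
    split_ifs
    · exact le_rfl
    · apply mul_nonpos_of_nonneg_of_nonpos
      · positivity
      · linarith [hv (μ - 1/(N : ℝ))]
  have a2 : (if μ = 1 then 0 else (N : ℝ) * (1 - μ)
              * (max (-(v (μ + 1/(N : ℝ)) - v (1 - μ - 1/(N : ℝ)))) 0)
              * (v (μ + 1/(N : ℝ)) - v μ)) ≤ 0 := by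
    split_ifs
    · exact le_rfl
    · apply mul_nonpos_of_nonneg_of_nonpos
      · have : 0 ≤ 1 - μ := by linarith
        positivity
      · linarith [hv (μ + 1/(N : ℝ))]
  have a3 : 0 ≤ (max (-(v (1 - μ) - v μ)) 0)^2 / 2 := by positivity
  unfold hjbRhs
  linarith

theorem hjbRhs_nonpos (N : ℕ) (v : ℝ → ℝ) (μ : ℝ) (h1 : μ ≤ 1)
    (hv : ∀ x, v μ ≤ v x) : hjbRhs N v μ ≤ 0 := by
  have a0 : max (-(v (1 - μ) - v μ)) 0 = 0 := max_eq_right (by linarith [hv (1 - μ)])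
  have a2 : 0 ≤ (if μ = 1 then 0 else (N : ℝ) * (1 - μ)
              * (max (-(v (μ + 1/(N : ℝ)) - v (1 - μ - 1/(N : ℝ)))) 0)
              * (v (μ + 1/(N : ℝ)) - v μ)) := by
    split_ifs
    · exact le_rfl
    · apply mul_nonneg
      · have : 0 ≤ 1 - μ := by linarith
        positivity
      · linarith [hv (μ + 1/(N : ℝ))]
  unfold hjbRhs
  rw [a0]
  simp only [mul_zero, zero_mul, ite_self]
  linarith

/-- Bounded and Lipschitz real functions. -/
def BddLip {E : Type*} [PseudoMetricSpace E] (f : E → ℝ) : Prop :=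
  (∃ B : ℝ, 0 ≤ B ∧ ∀ x, |f x| ≤ B) ∧ ∃ K : ℝ, 0 ≤ K ∧ ∀ x y, |f x - f y| ≤ K * dist x y

section
variable {E : Type*} [PseudoMetricSpace E] {f g : E → ℝ}

theorem BddLip.const (c : ℝ) : BddLip (fun _ : E => c) :=
  ⟨⟨|c|, abs_nonneg _, fun _ => le_rfl⟩, 0, le_rfl, fun x y => by simp⟩

theorem BddLip.sub (hf : BddLip f) (hg : BddLip g) : BddLip (fun x => f x - g x) := by
  obtain ⟨⟨B, hB, hfB⟩, K, hK, hfK⟩ := hf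
  obtain ⟨⟨C, hC, hgC⟩, L, hL, hgL⟩ := hg
  refine ⟨⟨B + C, by positivity, fun x => (abs_sub _ _).trans (add_le_add (hfB x) (hgC x))⟩,
    K + L, by positivity, fun x y => ?_⟩
  have : f x - g x - (f y - g y) = (f x - f y) - (g x - g y) := by ring
  rw [this, add_mul]
  exact (abs_sub _ _).trans (add_le_add (hfK x y) (hgL x y))

theorem BddLip.mul (hf : BddLip f) (hg : BddLip g) : BddLip (fun x => f x * g x) := by
  obtain ⟨⟨B, hB, hfB⟩, K, hK, hfK⟩ := hf
  obtain ⟨⟨C, hC, hgC⟩, L, hL, hgL⟩ := hg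
  refine ⟨⟨B * C, by positivity, fun x => ?_⟩, B * L + K * C, by positivity, fun x y => ?_⟩
  · rw [abs_mul]
    exact mul_le_mul (hfB x) (hgC x) (abs_nonneg _) hB
  · have : f x * g x - f y * g y = f x * (g x - g y) + (f x - f y) * g y := by ring
    rw [this]
    refine (abs_add_le _ _).trans ?_
    rw [abs_mul, abs_mul]
    have h1 := mul_le_mul (hfB x) (hgL x y) (abs_nonneg _) hB
    have h2 := mul_le_mul (hfK x y) (hgC y) (abs_nonneg _) (by positivity)
    calc _ ≤ B * (L * dist x y) + K * dist x y * C := add_le_add h1 h2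
      _ = _ := by ring

theorem BddLip.negPart (hf : BddLip f) : BddLip (fun x => max (-(f x)) 0) := by
  obtain ⟨⟨B, hB, hfB⟩, K, hK, hfK⟩ := hf
  refine ⟨⟨B, hB, fun x => ?_⟩, K, hK, fun x y => ?_⟩
  · rw [abs_of_nonneg (le_max_right _ _)]
    exact max_le ((neg_le_abs _).trans (hfB x)) hB
  · refine (abs_max_sub_max_le_abs _ _ _).trans ?_
    have : -(f x) - -(f y) = -(f x - f y) := by ring
    rw [this, abs_neg]
    exact hfK x y

theorem BddLip.ite (p : Prop) [Decidable p] (hf : BddLip f) (hg : BddLip g) :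
    BddLip (fun x => if p then f x else g x) := by
  by_cases h : p
  · simpa [h] using hf
  · simpa [h] using hg

theorem BddLip.hjb (N : ℕ) (v : E → ℝ → ℝ) (hv : ∀ μ, BddLip (fun x => v x μ)) (μ : ℝ) :
    BddLip (fun x => hjbRhs N (v x) μ) := by
  have hp := ((hv (1 - μ)).sub (hv μ)).negPart
  have hq := ((hv (μ + 1/(N : ℝ))).sub (hv (1 - μ - 1/(N : ℝ)))).negPart
  have h1 := (hp.mul hp).mul (BddLip.const (1/2))
  have h2 := BddLip.ite (μ = 0) (BddLip.const 0)
    (((BddLip.const ((N:ℝ) * μ)).mul hp).mul ((hv (μ - 1/(N : ℝ))).sub (hv μ)))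
  have h3 := BddLip.ite (μ = 1) (BddLip.const 0)
    (((BddLip.const ((N:ℝ) * (1 - μ))).mul hq).mul ((hv (μ + 1/(N : ℝ))).sub (hv μ)))
  convert (h1.sub h2).sub h3 using 2 with x
  unfold hjbRhs
  ring
end

/-- Truncation to `[-R, R]`. -/
noncomputable def clipR (R x : ℝ) : ℝ := max (min x R) (-R)

theorem clipR_le {R : ℝ} (hR : 0 ≤ R) (x : ℝ) : clipR R x ≤ R :=
  max_le (min_le_right _ _) (by linarith)

theorem le_clipR {R : ℝ} (x : ℝ) : -R ≤ clipR R x := le_max_right _ _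

theorem clipR_of_abs_le {R x : ℝ} (h : |x| ≤ R) : clipR R x = x := by
  obtain ⟨h1, h2⟩ := abs_le.1 h
  unfold clipR
  rw [min_eq_left h2, max_eq_left h1]

theorem clipR_of_ge {R x : ℝ} (hR : 0 ≤ R) (h : R ≤ x) : clipR R x = R := by
  unfold clipR
  rw [min_eq_right h, max_eq_left (by linarith)]

theorem clipR_of_le {R x : ℝ} (h : x ≤ -R) : clipR R x = -R :=
  max_eq_right ((min_le_left _ _).trans h)

open Classical in
/-- Extension by zero of a function on the grid. -/
noncomputable def gridExt (N : ℕ) (x : gridSN N → ℝ) (μ : ℝ) : ℝ :=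
  if h : μ ∈ gridSN N then x ⟨μ, h⟩ else 0

theorem gridExt_of_mem (N : ℕ) (x : gridSN N → ℝ) (μ : ℝ) (h : μ ∈ gridSN N) :
    gridExt N x μ = x ⟨μ, h⟩ := by
  simp [gridExt, h]

theorem gridSN_finite (N : ℕ) : (gridSN N).Finite := by
  apply ((Set.finite_Iic N).image (fun k : ℕ => (k:ℝ)/N)).subset
  rintro μ ⟨k, hk, rfl⟩
  exact ⟨k, hk, rfl⟩

theorem gridSN_bounds {N : ℕ} {μ : ℝ} (h : μ ∈ gridSN N) : 0 ≤ μ ∧ μ ≤ 1 := by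
  obtain ⟨k, hk, rfl⟩ := h
  exact ⟨by positivity, div_le_one_of_le₀ (by exact_mod_cast hk) (by positivity)⟩

noncomputable instance gridFintype (N : ℕ) : Fintype (gridSN N) := (gridSN_finite N).fintype

/-- The truncated vector field. -/
noncomputable def hjbField (N : ℕ) (R : ℝ) (x : gridSN N → ℝ) : gridSN N → ℝ :=
  fun μ => hjbRhs N (fun ν => clipR R (gridExt N x ν)) μ

theorem bddLip_coord (N : ℕ) (R : ℝ) (hR : 0 ≤ R) (ν : ℝ) :
    BddLip (fun x : gridSN N → ℝ => clipR R (gridExt N x ν)) := by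
  refine ⟨⟨R, hR, fun x => abs_le.2 ⟨le_clipR _, clipR_le hR _⟩⟩, 1, zero_le_one, fun x y => ?_⟩
  rw [one_mul]
  have h1 : |clipR R (gridExt N x ν) - clipR R (gridExt N y ν)|
      ≤ |gridExt N x ν - gridExt N y ν| := by
    refine (abs_max_sub_max_le_abs _ _ _).trans ?_
    refine (abs_min_sub_min_le_max _ _ _ _).trans ?_
    simp
  refine h1.trans ?_
  by_cases h : ν ∈ gridSN N
  · rw [gridExt_of_mem N x ν h, gridExt_of_mem N y ν h, ← Real.dist_eq]
    exact dist_le_pi_dist x y _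
  · simp [gridExt, h]

theorem hjbField_bdd_lip (N : ℕ) (R : ℝ) (hR : 0 ≤ R) :
    (∃ L : NNReal, ∀ x, ‖hjbField N R x‖ ≤ L) ∧ ∃ K : NNReal, LipschitzWith K (hjbField N R) := by
  have h : ∀ μ : gridSN N, BddLip (fun x : gridSN N → ℝ => hjbField N R x μ) := fun μ =>
    BddLip.hjb N (fun x ν => clipR R (gridExt N x ν)) (bddLip_coord N R hR) μ
  choose B hB0 hB using fun μ => (h μ).1
  choose K hK0 hK using fun μ => (h μ).2
  constructor
  · refine ⟨(∑ μ, B μ).toNNReal, fun x => ?_⟩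
    rw [Real.coe_toNNReal _ (Finset.sum_nonneg fun μ _ => hB0 μ),
      pi_norm_le_iff_of_nonneg (Finset.sum_nonneg fun μ _ => hB0 μ)]
    intro μ
    exact (hB μ x).trans (Finset.single_le_sum (fun ν _ => hB0 ν) (Finset.mem_univ μ))
  · refine ⟨(∑ μ, K μ).toNNReal, LipschitzWith.of_dist_le_mul ?_⟩
    intro x y
    have hs : 0 ≤ ∑ μ, K μ := Finset.sum_nonneg fun μ _ => hK0 μ
    rw [Real.coe_toNNReal _ hs, dist_pi_le_iff (mul_nonneg hs dist_nonneg)]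
    intro μ
    rw [Real.dist_eq]
    refine (hK μ x y).trans ?_
    exact mul_le_mul_of_nonneg_right
      (Finset.single_le_sum (fun ν _ => hK0 ν) (Finset.mem_univ μ)) dist_nonneg

theorem barrier (T : ℝ) (hT : 0 < T) (u u' : ℝ → ℝ)
    (hu : ∀ t ∈ Icc (0:ℝ) T, HasDerivWithinAt u (u' t) (Icc 0 T) t) (hTu : u T ≤ 1)
    (hs : ∀ t ∈ Icc (0:ℝ) T, 1 < u t → 0 ≤ u' t) : ∀ t ∈ Icc (0:ℝ) T, u t ≤ 1 := by
  have hmaps : MapsTo (fun s : ℝ => T - s) (Icc 0 T) (Icc 0 T) := by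
    intro s hs
    exact ⟨by linarith [hs.2], by linarith [hs.1]⟩
  have hd : ∀ s ∈ Icc (0:ℝ) T,
      HasDerivWithinAt (fun s => u (T - s)) (-u' (T - s)) (Icc 0 T) s := by
    intro s hs
    have h1 : HasDerivWithinAt (fun s : ℝ => T - s) (-1) (Icc 0 T) s := by
      simpa using ((hasDerivAt_id s).const_sub T).hasDerivWithinAt
    have := (hu (T - s) (hmaps hs)).comp s h1 hmaps
    rw [mul_neg_one] at this
    exact this
  have key : ∀ ε > 0, ∀ s ∈ Icc (0:ℝ) T, u (T - s) ≤ 1 + ε * (1 + s) := by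
    intro ε hε
    refine image_le_of_deriv_right_lt_deriv_boundary (f' := fun s => -u' (T - s))
      (B' := fun _ => ε) (fun s hs => (hd s hs).continuousWithinAt) ?_ ?_ ?_ ?_
    · intro s hs
      exact ((hd s ⟨hs.1, hs.2.le⟩).mono_of_mem_nhdsWithin (Icc_mem_nhdsGE_of_mem hs))
    · simp; linarith
    · intro x
      simpa using (((hasDerivAt_id x).const_add 1).const_mul ε).const_add 1
    · intro s hs' he
      have h1 : 1 < u (T - s) := by
        rw [he]
        have : 0 < ε * (1 + s) := mul_pos hε (by linarith [hs'.1])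
        linarith
      have := hs (T - s) (hmaps ⟨hs'.1, hs'.2.le⟩) h1
      linarith
  intro t ht
  have h2 : ∀ ε > 0, u t ≤ 1 + ε := by
    intro ε hε
    have h3 := key (ε / (1 + T)) (by positivity) (T - t) (hmaps ht)
    rw [sub_sub_cancel] at h3
    have h4 : ε / (1 + T) * (1 + (T - t)) ≤ ε / (1 + T) * (1 + T) :=
      mul_le_mul_of_nonneg_left (by linarith [ht.1]) (by positivity)
    rw [div_mul_cancel₀ _ (by positivity)] at h4
    linarith
  exact le_of_forall_pos_le_add h2

theorem hjbField_unique (N : ℕ) (R T : ℝ) (hR : 0 ≤ R) (X Y : ℝ → gridSN N → ℝ)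
    (hX : ∀ t ∈ Icc (0:ℝ) T, HasDerivWithinAt X (hjbField N R (X t)) (Icc 0 T) t)
    (hY : ∀ t ∈ Icc (0:ℝ) T, HasDerivWithinAt Y (hjbField N R (Y t)) (Icc 0 T) t)
    (hXY : X T = Y T) : EqOn X Y (Icc 0 T) := by
  obtain ⟨K, hK⟩ := (hjbField_bdd_lip N R hR).2
  refine ODE_solution_unique_of_mem_Icc_left (v := fun _ => hjbField N R) (s := fun _ => univ)
    (K := K) (fun t _ => hK.lipschitzOnWith) (fun t ht => (hX t ht).continuousWithinAt) ?_
    (fun _ _ => mem_univ _) (fun t ht => (hY t ht).continuousWithinAt) ?_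
    (fun _ _ => mem_univ _) hXY
  · intro t ht
    exact (hX t ⟨ht.1.le, ht.2⟩).mono_of_mem_nhdsWithin (Icc_mem_nhdsLE_of_mem ht)
  · intro t ht
    exact (hY t ⟨ht.1.le, ht.2⟩).mono_of_mem_nhdsWithin (Icc_mem_nhdsLE_of_mem ht)

theorem hjbField_exists (N : ℕ) (R T : ℝ) (hR : 0 ≤ R) (hT : 0 < T) (x₀ : gridSN N → ℝ) :
    ∃ X : ℝ → gridSN N → ℝ, X T = x₀ ∧
      ∀ t ∈ Icc (0:ℝ) T, HasDerivWithinAt X (hjbField N R (X t)) (Icc 0 T) t := by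
  obtain ⟨⟨L, hL⟩, K, hK⟩ := hjbField_bdd_lip N R hR
  have hP : IsPicardLindelof (fun _ => hjbField N R) (tmin := 0) (tmax := T)
      ⟨T, hT.le, le_rfl⟩ x₀ (L * T.toNNReal) 0 L K :=
    { lipschitzOnWith := fun t _ => hK.lipschitzOnWith
      continuousOn := fun x _ => continuousOn_const
      norm_le := fun t _ x _ => hL x
      mul_max_le := by
        simp [hT.le] }
  exact hP.exists_eq_forall_mem_Icc_hasDerivWithinAt₀

/-- A solution of the system bounded by `R` solves the truncated system. -/
theorem hjbSol_field (N : ℕ) (hN : 1 ≤ N) (R T : ℝ) (W : ℝ → ℝ → ℝ) (hW : HJBSol N T W)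
    (hb : ∀ t ∈ Icc (0:ℝ) T, ∀ μ ∈ gridSN N, |W t μ| ≤ R) :
    ∀ t ∈ Icc (0:ℝ) T, HasDerivWithinAt (fun t (μ : gridSN N) => W t μ)
      (hjbField N R (fun μ : gridSN N => W t μ)) (Icc 0 T) t := by
  intro t ht
  rw [hasDerivWithinAt_pi]
  intro μ
  have h1 : HasDerivWithinAt (fun s => W s μ) (hjbRhs N (W t) μ) (Icc 0 T) t :=
    hW μ μ.2 t ht
  have h2 : hjbField N R (fun μ : gridSN N => W t μ) μ = hjbRhs N (W t) μ := by
    apply hjbRhs_congr N hN _ _ _ _ μ.2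
    intro ν hν
    rw [gridExt_of_mem N _ ν hν, clipR_of_abs_le (hb t ht ν hν)]
  rw [h2]
  exact h1

/-- There is a unique solution of the HJB ODE system on `[0,T] × S_N` with
terminal condition `V(T,μ) = −(2μ−1)`, and it satisfies `|V(t,μ)| ≤ 1`. -/
theorem stmt_12 (N : ℕ) (hN : 1 ≤ N) (T : ℝ) (hT : 0 < T) :
    ∃ V : ℝ → ℝ → ℝ,
      HJBSol N T V ∧ (∀ μ ∈ gridSN N, V T μ = -(2*μ - 1)) ∧
      (∀ t ∈ Set.Icc (0:ℝ) T, ∀ μ ∈ gridSN N, |V t μ| ≤ 1) ∧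
      (∀ W : ℝ → ℝ → ℝ, HJBSol N T W → (∀ μ ∈ gridSN N, W T μ = -(2*μ - 1)) →
        ∀ t ∈ Set.Icc (0:ℝ) T, ∀ μ ∈ gridSN N, W t μ = V t μ) := by
  obtain ⟨X, hXT, hX⟩ := hjbField_exists N 1 T zero_le_one hT (fun μ => -(2 * (μ:ℝ) - 1))
  have hXc : ∀ μ : gridSN N, ∀ t ∈ Icc (0:ℝ) T,
      HasDerivWithinAt (fun s => X s μ) (hjbField N 1 (X t) μ) (Icc 0 T) t :=
    fun μ t ht => hasDerivWithinAt_pi.1 (hX t ht) μ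
  have hup : ∀ μ : gridSN N, ∀ t ∈ Icc (0:ℝ) T, X t μ ≤ 1 := by
    intro μ
    obtain ⟨m0, m1⟩ := gridSN_bounds μ.2
    refine barrier T hT (fun s => X s μ) (fun t => hjbField N 1 (X t) μ) (hXc μ) ?_ ?_
    · simp only [hXT]; linarith
    · intro t ht h1
      apply hjbRhs_nonneg N _ _ m0 m1
      intro x
      rw [gridExt_of_mem N _ _ μ.2, clipR_of_ge zero_le_one (le_of_lt h1)]
      exact clipR_le zero_le_one _
  have hlo : ∀ μ : gridSN N, ∀ t ∈ Icc (0:ℝ) T, -X t μ ≤ 1 := by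
    intro μ
    obtain ⟨m0, m1⟩ := gridSN_bounds μ.2
    refine barrier T hT (fun s => -X s μ) (fun t => -hjbField N 1 (X t) μ)
      (fun t ht => (hXc μ t ht).neg) ?_ ?_
    · simp only [hXT]; linarith
    · intro t ht h1
      rw [neg_nonneg]
      apply hjbRhs_nonpos N _ _ m1
      intro x
      have h2 : X t μ ≤ -1 := by linarith
      rw [gridExt_of_mem N _ _ μ.2, clipR_of_le h2]
      exact le_clipR _
  have hXb : ∀ t ∈ Icc (0:ℝ) T, ∀ μ : gridSN N, |X t μ| ≤ 1 := fun t ht μ =>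
    abs_le.2 ⟨by linarith [hlo μ t ht], hup μ t ht⟩
  have hVb : ∀ t ∈ Icc (0:ℝ) T, ∀ μ ∈ gridSN N, |gridExt N (X t) μ| ≤ 1 := by
    intro t ht μ hμ
    rw [gridExt_of_mem N _ _ hμ]
    exact hXb t ht _
  have hV : HJBSol N T (fun t => gridExt N (X t)) := by
    intro μ hμ t ht
    have h1 := hXc ⟨μ, hμ⟩ t ht
    have h2 : hjbField N 1 (X t) ⟨μ, hμ⟩ = hjbRhs N (gridExt N (X t)) μ := by
      apply hjbRhs_congr N hN _ _ _ _ hμ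
      intro ν hν
      exact clipR_of_abs_le (hVb t ht ν hν)
    rw [h2] at h1
    have h3 : (fun s => gridExt N (X s) μ) = fun s => X s ⟨μ, hμ⟩ :=
      funext fun s => gridExt_of_mem N _ _ hμ
    change HasDerivWithinAt (fun s => gridExt N (X s) μ) (hjbRhs N (gridExt N (X t)) μ) _ t
    rw [h3]
    exact h1
  have hVT : ∀ μ ∈ gridSN N, gridExt N (X T) μ = -(2*μ - 1) := by
    intro μ hμ
    rw [gridExt_of_mem N _ _ hμ, hXT]
  refine ⟨fun t => gridExt N (X t), hV, hVT, hVb, ?_⟩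
  intro W hW hWT
  have hc : ContinuousOn (fun t (μ : gridSN N) => W t μ) (Icc 0 T) :=
    continuousOn_pi.2 fun μ t ht => (hW μ μ.2 t ht).continuousWithinAt
  obtain ⟨C, hC⟩ := isCompact_Icc.exists_bound_of_continuousOn hc
  have hWb : ∀ t ∈ Icc (0:ℝ) T, ∀ μ ∈ gridSN N, |W t μ| ≤ max C 1 := fun t ht μ hμ =>
    ((norm_le_pi_norm (fun μ : gridSN N => W t μ) ⟨μ, hμ⟩).trans (hC t ht)).trans (le_max_left _ _)
  have hE := hjbField_unique N (max C 1) T (le_max_of_le_right zero_le_one) _ _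
    (hjbSol_field N hN _ T W hW hWb)
    (hjbSol_field N hN _ T _ hV fun t ht μ hμ => (hVb t ht μ hμ).trans (le_max_right _ _))
    (funext fun μ => (hWT μ μ.2).trans (hVT μ μ.2).symm)
  intro t ht μ hμ
  exact congrFun (hE ht) ⟨μ, hμ⟩
end

section
/- Fix N ≥ 1, T > 0, S_N = {0, 1/N, …, 1}, and let V : [0,T] × S_N → ℝ be the unique solution of the Hamilton–Jacobi–Bellman ODE system −(d/dt)V(t,μ) + ((V(t,1−μ) − V(t,μ))⁻)²/2 = Nμ · (V(t,1−μ) − V(t,μ))⁻ · (V(t,μ−1/N) − V(t,μ)) + N(1−μ) · (V(t,μ+1/N) − V(t,1−μ−1/N))⁻ · (V(t,μ+1/N) − V(t,μ)) with terminal condition V(T,μ) = −(2μ−1) (terms with coefficient Nμ omitted at μ = 0, terms with coefficient N(1−μ) omitted at μ = 1). Define Z(t,μ) = V(t,1−μ) − V(t,μ). Then for every t ∈ [0,T] and μ ∈ S_N: Z(t,μ) ≥ 0 whenever μ ≥ 1/2, and Z(t,μ) ≤ 0 whenever μ ≤ 1/2. -/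
/-- Derivative expression on the grid. -/
noncomputable def DD (N : ℕ) (u : ℕ → ℝ) (k : ℕ) : ℝ :=
  (max (-(u (N - k) - u k)) 0)^2 / 2
    - (k : ℝ) * (max (-(u (N - k) - u k)) 0) * (u (k - 1) - u k)
    - ((N : ℝ) - k) * (max (-(u (k + 1) - u (N - k - 1))) 0) * (u (k + 1) - u k)

theorem tri_bound {n p q A B C : ℝ} (hn : 0 ≤ n) (hnA : n ≤ A) (hp : 0 ≤ p) (hpB : p ≤ B)
    (hq : q ≤ C) (hC : 0 ≤ C) : n * p * q ≤ A * B * C := by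
  have h1 : n * p ≤ A * B := mul_le_mul hnA hpB hp (hn.trans hnA)
  have h0 : 0 ≤ n * p := mul_nonneg hn hp
  calc n * p * q ≤ n * p * C := mul_le_mul_of_nonneg_left hq h0
    _ ≤ _ := mul_le_mul_of_nonneg_right h1 hC

theorem est_z (N : ℕ) (u : ℕ → ℝ) (M S : ℝ) (hM : ∀ k, |u k| ≤ M) (hS : 0 ≤ S)
    (hz : ∀ k, k ≤ N → N ≤ 2 * k → -(u (N - k) - u k) ≤ S)
    (hw : ∀ k, k ≤ N → N ≤ 2 * k → -(u k - u (k + 1)) ≤ S)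
    (k : ℕ) (hk : k ≤ N) (hk2 : N ≤ 2 * k) (hneg : u (N - k) - u k < 0) :
    DD N u (N - k) - DD N u k ≤ (6 * M * N + M) * S := by
  have hM0 : 0 ≤ M := (abs_nonneg _).trans (hM 0)
  have hd : ∀ a b, u a - u b ≤ 2 * M := fun a b => by
    have := abs_le.1 (hM a); have := abs_le.1 (hM b); linarith
  have hkR : (k : ℝ) ≤ N := by exact_mod_cast hk
  have hk0 : (0 : ℝ) ≤ k := Nat.cast_nonneg k
  have hN0 : (0 : ℝ) ≤ N := Nat.cast_nonneg N
  have hk1 : 1 ≤ k := by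
    rcases Nat.eq_zero_or_pos k with h | h
    · subst h
      have : N = 0 := by omega
      subst this
      simp at hneg
    · exact h
  have e1 : N - (N - k) = k := by omega
  have e2 : N - (N - k) - 1 = k - 1 := by omega
  have e3 : N - k + 1 = N - (k - 1) := by omega
  have hzk := hz k hk hk2
  have hp : max (-(u (N - (k - 1)) - u (k - 1))) 0 ≤ S := by
    apply max_le _ hS
    rcases Nat.lt_or_ge (2 * (k - 1)) N with h | h
    · rcases Nat.lt_or_ge N (2 * k) with h' | h'
      · have a1 : N - (k - 1) = k := by omega
        have a2 : k - 1 = N - k := by omega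
        rw [a1, a2]; linarith
      · have a1 : N - k = k := by omega
        rw [a1] at hneg; simp at hneg
    · exact hz (k - 1) (by omega) h
  have hD1 : DD N u (N - k) ≤ N * S * (2 * M) := by
    unfold DD
    rw [e1, e3, max_eq_right (by linarith : -(u k - u (N - k)) ≤ 0), Nat.cast_sub hk]
    have := tri_bound hk0 hkR (le_max_right _ _) hp (hd (N - k) (N - (k - 1))) (by linarith)
    nlinarith
  have hD2 : - DD N u k ≤ N * S * (2 * M) + N * (2 * M) * S := by
    unfold DD
    have t1 := tri_bound hk0 hkR (le_max_right _ _) (max_le hzk hS) (hd (k - 1) k) (by linarith)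
    have t2 := tri_bound (by linarith : (0 : ℝ) ≤ N - k) (by linarith : (N : ℝ) - k ≤ N)
      (le_max_right (-(u (k + 1) - u (N - k - 1))) 0)
      (max_le (by have := hd (N - k - 1) (k + 1); linarith) (by linarith : (0 : ℝ) ≤ 2 * M))
      (by have := hw k hk hk2; linarith : u (k + 1) - u k ≤ S) hS
    have t3 : 0 ≤ (max (-(u (N - k) - u k)) 0) ^ 2 / 2 := by positivity
    linarith
  have : 0 ≤ M * S := mul_nonneg hM0 hS
  nlinarith

theorem est_w (N : ℕ) (u : ℕ → ℝ) (M S : ℝ) (hM : ∀ k, |u k| ≤ M) (hS : 0 ≤ S)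
    (hz : ∀ k, k ≤ N → N ≤ 2 * k → -(u (N - k) - u k) ≤ S)
    (hw : ∀ k, k ≤ N → N ≤ 2 * k → -(u k - u (k + 1)) ≤ S)
    (k : ℕ) (hk : k < N) (hk2 : N ≤ 2 * k) (hneg : u k - u (k + 1) < 0) :
    DD N u k - DD N u (k + 1) ≤ (6 * M * N + M) * S := by
  have hM0 : 0 ≤ M := (abs_nonneg _).trans (hM 0)
  have hd : ∀ a b, u a - u b ≤ 2 * M := fun a b => by
    have := abs_le.1 (hM a); have := abs_le.1 (hM b); linarith
  have hkR : ((k + 1 : ℕ) : ℝ) ≤ N := by exact_mod_cast hk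
  have hkR' : (k : ℝ) ≤ N := by exact_mod_cast hk.le
  have hk0 : (0 : ℝ) ≤ k := Nat.cast_nonneg k
  have hk0' : (0 : ℝ) ≤ (k + 1 : ℕ) := Nat.cast_nonneg _
  have hN0 : (0 : ℝ) ≤ N := Nat.cast_nonneg N
  have hD1 : DD N u k ≤ M * S + N * S * (2 * M) := by
    unfold DD
    have hm := max_le (hz k hk.le hk2) hS
    have hm2 : max (-(u (N - k) - u k)) 0 ≤ 2 * M :=
      max_le (by have := hd k (N - k); linarith) (by linarith)
    have hm0 := le_max_right (-(u (N - k) - u k)) 0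
    have t1 := tri_bound hk0 hkR' hm0 hm (hd k (k - 1)) (by linarith)
    have t2 : 0 ≤ ((N : ℝ) - k) * (max (-(u (k + 1) - u (N - k - 1))) 0) * (u (k + 1) - u k) :=
      mul_nonneg (mul_nonneg (by linarith) (le_max_right _ _)) (by linarith)
    have t3 := mul_le_mul hm2 hm hm0 (by linarith : 0 ≤ 2 * M)
    nlinarith
  have hD2 : - DD N u (k + 1) ≤ N * S * (2 * M) + N * (2 * M) * S := by
    unfold DD
    have t1 := tri_bound hk0' hkR (le_max_right _ _)
      (max_le (hz (k + 1) hk (by omega)) hS) (hd (k + 1 - 1) (k + 1)) (by linarith)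
    have t2 := tri_bound (by linarith : (0 : ℝ) ≤ N - (k + 1 : ℕ))
      (by linarith : (N : ℝ) - (k + 1 : ℕ) ≤ N)
      (le_max_right (-(u (k + 1 + 1) - u (N - (k + 1) - 1))) 0)
      (max_le (by have := hd (N - (k + 1) - 1) (k + 1 + 1); linarith) (by linarith : (0 : ℝ) ≤ 2 * M))
      (by have := hw (k + 1) hk (by omega); linarith : u (k + 1 + 1) - u (k + 1) ≤ S) hS
    have t3 : 0 ≤ (max (-(u (N - (k + 1)) - u (k + 1))) 0) ^ 2 / 2 := by positivity
    linarith
  nlinarith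

theorem hasDerivAt_negsq (y : ℝ) :
    HasDerivAt (fun y : ℝ => (max (-y) 0) ^ 2) (-2 * max (-y) 0) y := by
  rcases lt_trichotomy y 0 with h | h | h
  · rw [max_eq_left (by linarith)]
    have h1 : HasDerivAt (fun y : ℝ => y ^ 2) (-2 * -y) y := by
      simpa using hasDerivAt_pow 2 y
    refine h1.congr_of_eventuallyEq ?_
    filter_upwards [Iio_mem_nhds h] with x hx
    rw [max_eq_left (by linarith [Set.mem_Iio.1 hx])]; ring
  · subst h
    rw [hasDerivAt_iff_isLittleO]
    simp only [neg_zero, max_self, mul_zero, sub_zero, smul_zero, ne_eq, OfNat.ofNat_ne_zero,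
      not_false_eq_true, zero_pow]
    have h2 : (fun x : ℝ => x ^ 2) =o[nhds 0] fun x => x := by
      simpa using Asymptotics.isLittleO_pow_id (𝕜 := ℝ) (n := 2) (by norm_num)
    refine Asymptotics.IsBigO.trans_isLittleO ?_ h2
    refine Asymptotics.IsBigO.of_bound 1 (Filter.Eventually.of_forall fun x => ?_)
    rw [one_mul, norm_pow, norm_pow]
    gcongr
    rw [Real.norm_eq_abs, Real.norm_eq_abs, abs_of_nonneg (le_max_right _ _)]
    exact max_le (neg_le_abs x) (abs_nonneg x)
  · rw [max_eq_right (by linarith), mul_zero]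
    refine (hasDerivAt_const y (0 : ℝ)).congr_of_eventuallyEq ?_
    filter_upwards [Ioi_mem_nhds h] with x hx
    rw [max_eq_right (by linarith [Set.mem_Ioi.1 hx])]; simp

theorem invariance {ι : Type} [Fintype ι] (T C : ℝ) (hC : 0 ≤ C) (x x' : ι → ℝ → ℝ)
    (hx : ∀ i, ∀ t ∈ Set.Icc (0 : ℝ) T, HasDerivWithinAt (x i) (x' i t) (Set.Icc 0 T) t)
    (hT : ∀ i, 0 ≤ x i T)
    (hest : ∀ i, ∀ t ∈ Set.Icc (0 : ℝ) T, x i t < 0 → ∀ S, 0 ≤ S → (∀ j, -x j t ≤ S) →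
      x' i t ≤ C * S) :
    ∀ i, ∀ t ∈ Set.Icc (0 : ℝ) T, 0 ≤ x i t := by
  classical
  let φ : ℝ → ℝ := fun t => ∑ i, (max (-x i t) 0) ^ 2
  let φ' : ℝ → ℝ := fun t => ∑ i, (-2 * max (-x i t) 0) * x' i t
  let n : ℝ := Fintype.card ι
  let K : ℝ := 2 * C * n
  have hφ : ∀ t ∈ Set.Icc (0 : ℝ) T, HasDerivWithinAt φ (φ' t) (Set.Icc 0 T) t := by
    intro t ht
    refine HasDerivWithinAt.fun_sum fun i _ => ?_
    exact (hasDerivAt_negsq (x i t)).comp_hasDerivWithinAt t (hx i t ht)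
  have hφ0 : ∀ t, 0 ≤ φ t := fun t => Finset.sum_nonneg fun i _ => sq_nonneg _
  have hle : ∀ t ∈ Set.Icc (0 : ℝ) T, 0 ≤ φ' t + K * φ t := by
    intro t ht
    set r := Real.sqrt (φ t) with hr
    have hr0 : 0 ≤ r := Real.sqrt_nonneg _
    have hr2 : r ^ 2 = φ t := Real.sq_sqrt (hφ0 t)
    have hm : ∀ j, max (-x j t) 0 ≤ r := fun j => by
      apply Real.le_sqrt_of_sq_le
      exact Finset.single_le_sum (f := fun i => (max (-x i t) 0) ^ 2)
        (fun i _ => sq_nonneg _) (Finset.mem_univ j)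
    have hj : ∀ j, -x j t ≤ r := fun j => (le_max_left _ _).trans (hm j)
    have hterm : ∀ i ∈ Finset.univ, -(2 * C * r ^ 2) ≤ (-2 * max (-x i t) 0) * x' i t := by
      intro i _
      rcases lt_or_ge (x i t) 0 with h | h
      · have h1 := hest i t ht h r hr0 hj
        have h2 := hm i
        have h3 := le_max_right (-x i t) 0
        have h4 := mul_le_mul_of_nonneg_left h1 h3
        have h5 := mul_le_mul_of_nonneg_right h2 (mul_nonneg hC hr0)
        nlinarith
      · rw [max_eq_right (by linarith)]
        have : 0 ≤ C * r ^ 2 := by positivity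
        simp; linarith
    have := Finset.card_nsmul_le_sum _ _ _ hterm
    rw [nsmul_eq_mul, Finset.card_univ] at this
    have e : K * φ t = n * (2 * C * r ^ 2) := by rw [hr2]; ring
    rw [e]
    change n * -(2 * C * r ^ 2) ≤ φ' t at this
    linarith
  have hψ : ∀ t ∈ Set.Icc (0 : ℝ) T, HasDerivWithinAt (fun t => φ t * Real.exp (K * t))
      (φ' t * Real.exp (K * t) + φ t * (Real.exp (K * t) * K)) (Set.Icc 0 T) t := by
    intro t ht
    have h1 : HasDerivAt (fun t => Real.exp (K * t)) (Real.exp (K * t) * K) t := by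
      have := ((hasDerivAt_id t).const_mul K).exp
      simpa using this
    exact (hφ t ht).mul h1.hasDerivWithinAt
  have hmono : MonotoneOn (fun t => φ t * Real.exp (K * t)) (Set.Icc 0 T) := by
    refine monotoneOn_of_hasDerivWithinAt_nonneg (convex_Icc 0 T)
      (fun t ht => (hψ t ht).continuousWithinAt)
      (fun t ht => (hψ t (interior_subset ht)).mono interior_subset) ?_
    intro t ht
    have := mul_nonneg (hle t (interior_subset ht)) (Real.exp_pos (K * t)).le
    linarith
  intro i t ht
  have h1 := hmono ht (Set.right_mem_Icc.2 (ht.1.trans ht.2)) ht.2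
  have h2 : φ T = 0 := Finset.sum_eq_zero fun i _ => by
    rw [max_eq_right (by linarith [hT i])]; simp
  simp only [h2, zero_mul] at h1
  have h3 : φ t ≤ 0 := by
    by_contra hc
    push Not at hc
    have := mul_pos hc (Real.exp_pos (K * t))
    linarith
  have h4 := (Finset.single_le_sum (f := fun i => (max (-x i t) 0) ^ 2)
        (fun i _ => sq_nonneg _) (Finset.mem_univ i)).trans h3
  have h5 : max (-x i t) 0 = 0 := by
    have := le_antisymm h4 (sq_nonneg _)
    simpa using this
  have := le_max_left (-x i t) 0
  linarith

theorem main_grid (N : ℕ) (hN : 1 ≤ N) (T : ℝ) (V : ℝ → ℝ → ℝ)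
    (hV : HJBSol N T V) (hterm : ∀ μ ∈ gridSN N, V T μ = -(2*μ - 1)) :
    ∀ k, k ≤ N → N ≤ 2 * k → ∀ t ∈ Set.Icc (0:ℝ) T,
      0 ≤ V t (((N - k : ℕ) : ℝ) / N) - V t ((k : ℝ) / N) := by
  have hNpos : (0 : ℝ) < N := by exact_mod_cast hN
  let v : ℕ → ℝ → ℝ := fun k t => V t (((min k N : ℕ) : ℝ) / N)
  have hvk : ∀ k, k ≤ N → ∀ t, v k t = V t ((k : ℝ) / N) := fun k hk t => by
    simp only [v, min_eq_left hk]
  have hgrid : ∀ k, ((min k N : ℕ) : ℝ) / N ∈ gridSN N := fun k => ⟨_, min_le_right _ _, rfl⟩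
  have hder : ∀ k, k ≤ N → ∀ t ∈ Set.Icc (0 : ℝ) T,
      HasDerivWithinAt (v k) (DD N (fun m => v m t) k) (Set.Icc 0 T) t := by
    intro k hk t ht
    have h := hV _ (hgrid k) t ht
    rw [min_eq_left hk] at h
    have e0 : (fun s => V s ((k : ℝ) / N)) = v k := by
      funext s; rw [hvk k hk]
    rw [e0] at h
    convert h using 1
    unfold DD
    have a1 : (1 : ℝ) - k / N = ((N - k : ℕ) : ℝ) / N := by
      rw [Nat.cast_sub hk]; field_simp
    rw [a1, ← hvk k hk t, ← hvk (N - k) (by omega) t]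
    congr 1
    · congr 1
      rcases Nat.eq_zero_or_pos k with h0 | h0
      · subst h0; simp
      · have : (k : ℝ) / N ≠ 0 := by positivity
        rw [if_neg this]
        have a2 : (k : ℝ) / N - 1 / N = ((k - 1 : ℕ) : ℝ) / N := by
          rw [Nat.cast_sub h0]; field_simp; simp
        rw [a2, ← hvk (k - 1) (by omega) t]
        have a3 : (N : ℝ) * (k / N) = k := by field_simp
        rw [a3]
    · rcases Nat.eq_or_lt_of_le hk with h0 | h0
      · subst h0; simp [hNpos.ne']
      · have h1 : (k : ℝ) < N := by exact_mod_cast h0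
        have : (k : ℝ) / N ≠ 1 := by
          rw [Ne, div_eq_one_iff_eq hNpos.ne']; exact h1.ne
        rw [if_neg this]
        have a2 : (k : ℝ) / N + 1 / N = ((k + 1 : ℕ) : ℝ) / N := by
          push_cast; field_simp
        have a4 : ((N - k : ℕ) : ℝ) / N - 1 / N = ((N - k - 1 : ℕ) : ℝ) / N := by
          rw [Nat.cast_sub (by omega : 1 ≤ N - k)]; field_simp; simp
        have a3 : (N : ℝ) * (((N - k : ℕ) : ℝ) / N) = N - k := by
          rw [Nat.cast_sub hk]; field_simp
        rw [a2, a4, a3, ← hvk (k + 1) (by omega) t, ← hvk (N - k - 1) (by omega) t]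
  have hbd : ∃ M, ∀ t ∈ Set.Icc (0 : ℝ) T, ∀ k, |v k t| ≤ M := by
    have hc : ContinuousOn (fun t => fun i : Fin (N + 1) => v i t) (Set.Icc 0 T) :=
      continuousOn_pi.2 fun i t ht => (hder i (by omega) t ht).continuousWithinAt
    obtain ⟨M, hM⟩ := isCompact_Icc.exists_bound_of_continuousOn hc
    refine ⟨M, fun t ht k => ?_⟩
    have h1 := (norm_le_pi_norm (fun i : Fin (N + 1) => v i t) ⟨min k N, by omega⟩).trans (hM t ht)
    simpa [v] using h1
  obtain ⟨M, hM⟩ := hbd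
  intro k hk hk2 t ht
  have hM0 : 0 ≤ M := (abs_nonneg _).trans (hM t ht 0)
  have hw0 : ∀ s, v N s - v (N + 1) s = 0 := fun s => by simp [v]
  let x : ({k : Fin (N + 1) // N ≤ 2 * (k : ℕ)} × Bool) → ℝ → ℝ := fun p s =>
    if p.2 = true then v (N - (p.1.1 : ℕ)) s - v (p.1.1 : ℕ) s
      else v (p.1.1 : ℕ) s - v ((p.1.1 : ℕ) + 1) s
  let x' : ({k : Fin (N + 1) // N ≤ 2 * (k : ℕ)} × Bool) → ℝ → ℝ := fun p s =>
    if p.2 = true then DD N (fun m => v m s) (N - (p.1.1 : ℕ)) - DD N (fun m => v m s) (p.1.1 : ℕ)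
      else if (p.1.1 : ℕ) = N then 0
      else DD N (fun m => v m s) (p.1.1 : ℕ) - DD N (fun m => v m s) ((p.1.1 : ℕ) + 1)
  have hTv : ∀ k, k ≤ N → v k T = -(2 * ((k : ℝ) / N) - 1) := fun k hk => by
    rw [hvk k hk]; exact hterm _ ⟨k, hk, rfl⟩
  have key := invariance T (6 * M * N + M) (by positivity) x x' ?_ ?_ ?_
    (⟨⟨k, by omega⟩, hk2⟩, true) t ht
  · simpa only [x, if_true, hvk k hk, hvk (N - k) (Nat.sub_le _ _)] using key
  · rintro ⟨⟨⟨m, hm⟩, hm2⟩, b⟩ s hs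
    cases b
    · by_cases h : m = N
      · subst h
        have : x (⟨⟨m, hm⟩, hm2⟩, false) = fun _ => 0 := by
          funext s; simpa [x] using hw0 s
        rw [this]
        simpa [x'] using hasDerivWithinAt_const s _ (0 : ℝ)
      · simp only [x, x', h]
        exact (hder m (by omega) s hs).sub (hder (m + 1) (by omega) s hs)
    · exact (hder (N - m) (by omega) s hs).sub (hder m (by omega) s hs)
  · rintro ⟨⟨⟨m, hm⟩, hm2⟩, b⟩
    cases b
    · by_cases h : m = N
      · subst h; simpa [x] using (hw0 T).ge
      · change 0 ≤ v m T - v (m + 1) T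
        rw [hTv m (by omega), hTv (m + 1) (by omega)]
        push_cast
        have : ((m : ℝ) + 1) / N = m / N + 1 / N := by ring
        have : (0 : ℝ) < 1 / N := by positivity
        linarith
    · change 0 ≤ v (N - m) T - v m T
      rw [hTv m (by omega), hTv (N - m) (by omega)]
      have : ((N - m : ℕ) : ℝ) / N ≤ m / N := by
        have hm3 : N ≤ 2 * m := hm2
        gcongr; omega
      linarith
  · rintro ⟨⟨⟨m, hm⟩, hm2⟩, b⟩ s hs hneg S hS hj
    have hz : ∀ k, k ≤ N → N ≤ 2 * k → -(v (N - k) s - v k s) ≤ S := fun k h1 h2 =>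
      hj (⟨⟨k, by omega⟩, h2⟩, true)
    have hw : ∀ k, k ≤ N → N ≤ 2 * k → -(v k s - v (k + 1) s) ≤ S := fun k h1 h2 =>
      hj (⟨⟨k, by omega⟩, h2⟩, false)
    cases b
    · change v m s - v (m + 1) s < 0 at hneg
      have h : m ≠ N := by
        rintro rfl
        rw [hw0 s] at hneg; exact lt_irrefl _ hneg
      simp only [x', h]
      exact est_w N (fun m => v m s) M S (hM s hs) hS hz hw m (by omega) hm2 hneg
    · exact est_z N (fun m => v m s) M S (hM s hs) hS hz hw m (by omega) hm2 hneg

/-- Let `V` be the solution of the HJB ODE system with terminal condition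
`V(T,μ) = −(2μ−1)`, and `Z(t,μ) = V(t,1−μ) − V(t,μ)`. Then for every
`t ∈ [0,T]` and `μ ∈ S_N`: `Z(t,μ) ≥ 0` whenever `μ ≥ 1/2`, and `Z(t,μ) ≤ 0`
whenever `μ ≤ 1/2`. -/
theorem stmt_13 (N : ℕ) (hN : 1 ≤ N) (T : ℝ) (hT : 0 < T) (V : ℝ → ℝ → ℝ)
    (hV : HJBSol N T V) (hterm : ∀ μ ∈ gridSN N, V T μ = -(2*μ - 1)) :
    ∀ t ∈ Set.Icc (0:ℝ) T, ∀ μ ∈ gridSN N,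
      (1/2 ≤ μ → 0 ≤ V t (1 - μ) - V t μ) ∧
      (μ ≤ 1/2 → V t (1 - μ) - V t μ ≤ 0) := by
  rintro t ht μ ⟨k, hk, rfl⟩
  have hNpos : (0 : ℝ) < N := by exact_mod_cast hN
  have a1 : (1 : ℝ) - k / N = ((N - k : ℕ) : ℝ) / N := by
    rw [Nat.cast_sub hk]; field_simp
  rw [a1]
  have key := main_grid N hN T V hV hterm
  constructor
  · intro h
    rw [div_le_div_iff₀ (by norm_num) hNpos] at h
    have h2 : N ≤ 2 * k := by
      have : (N : ℝ) ≤ 2 * k := by linarith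
      exact_mod_cast this
    exact key k hk h2 t ht
  · intro h
    rw [div_le_div_iff₀ hNpos (by norm_num)] at h
    have h2 : 2 * k ≤ N := by
      have : (2 * k : ℝ) ≤ N := by linarith
      exact_mod_cast this
    have := key (N - k) (by omega) (by omega) t ht
    rw [Nat.sub_sub_self hk] at this
    linarith
end

section
/- Let T > 0 and m₀ ∈ (0,1]. For t ∈ [0,T] and m ∈ [−1,1], let M(t,m) be defined as follows: for m > 0, M(t,m) is the unique positive solution of t²M³ + t(2−t)M² + (1−2t)M = m; M(t,0) = 0; and M(t,m) = −M(t,−m) for m < 0. Define Z(t,m) = 2M(t,m)/(t|M(t,m)| + 1). Then the initial value problem m′(t) = −m(t)|Z(T−t, m(t))| + Z(T−t, m(t)), m(0) = m₀, admits a unique differentiable solution m : [0,T] → [−1,1]; this solution satisfies m(t) ≥ m₀ > 0 for all t ∈ [0,T]. -/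
/-- The consistency polynomial. -/
def consF (t x : ℝ) : ℝ := t^2 * x^3 + t*(2 - t) * x^2 + (1 - 2*t) * x

lemma consF_eq (t x : ℝ) : consF t x = 1 - (1 - x) * (1 + t * x)^2 := by
  unfold consF; ring

lemma consF_core {t x y c : ℝ} (ht : 0 ≤ t) (hy : 0 < y) (hy1 : y ≤ 1) (hxy : y ≤ x)
    (hc : 0 < c) (hF : c ≤ consF t y) : c * (x - y) ≤ consF t x - consF t y := by
  have hx : 0 < x := lt_of_lt_of_le hy hxy
  have hq : c ≤ t^2 * y^2 + t*(2-t)*y + (1 - 2*t) := by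
    by_contra! h
    have h1 : consF t y = (t^2 * y^2 + t*(2-t)*y + (1 - 2*t)) * y := by unfold consF; ring
    have h2 : (t^2 * y^2 + t*(2-t)*y + (1 - 2*t)) * y < c * y := mul_lt_mul_of_pos_right h hy
    nlinarith
  have hs : 0 ≤ t*y + 2 - t := by
    by_contra! h
    have h1 : 0 ≤ t * y := by positivity
    have h2 : t * y * (t*y + 2 - t) ≤ 0 := mul_nonpos_of_nonneg_of_nonpos h1 h.le
    nlinarith
  have hr : 0 ≤ t * x * (t * x + (t * y + 2 - t)) := by positivity
  have e : consF t x - consF t y =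
      (t * x * (t * x + (t * y + 2 - t)) + (t^2 * y^2 + t*(2-t)*y + (1 - 2*t))) * (x - y) := by
    unfold consF; ring
  rw [e]
  exact mul_le_mul_of_nonneg_right (by linarith) (by linarith)

lemma consF_abs {t x y c : ℝ} (ht : 0 ≤ t) (hy : 0 < y) (hy1 : y ≤ 1) (hx : 0 < x) (hx1 : x ≤ 1)
    (hc : 0 < c) (hFy : c ≤ consF t y) (hFx : c ≤ consF t x) :
    c * |x - y| ≤ |consF t x - consF t y| := by
  rcases le_total y x with h | h
  · rw [abs_of_nonneg (sub_nonneg.2 h)]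
    exact (consF_core ht hy hy1 h hc hFy).trans (le_abs_self _)
  · rw [abs_sub_comm x y, abs_sub_comm (consF t x), abs_of_nonneg (sub_nonneg.2 h)]
    exact (consF_core ht hx hx1 h hc hFx).trans (le_abs_self _)

lemma zdiff {t x y : ℝ} (ht : 0 ≤ t) (hy : 0 < y) (hx : 0 < x) :
    |2 * x / (t * x + 1) - 2 * y / (t * y + 1)| ≤ 2 * |x - y| := by
  have h1 : 1 ≤ t * x + 1 := by nlinarith [mul_nonneg ht hx.le]
  have h2 : 1 ≤ t * y + 1 := by nlinarith [mul_nonneg ht hy.le]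
  have e : 2 * x / (t * x + 1) - 2 * y / (t * y + 1)
      = 2 * (x - y) / ((t * x + 1) * (t * y + 1)) := by
    have : t * x + 1 ≠ 0 := by linarith
    have : t * y + 1 ≠ 0 := by linarith
    field_simp
    ring
  have h3 : 1 ≤ (t * x + 1) * (t * y + 1) := one_le_mul_of_one_le_of_one_le h1 h2
  rw [e, abs_div, abs_mul, abs_of_pos (by linarith : 0 < (t * x + 1) * (t * y + 1)),
    abs_of_pos (by norm_num : (0:ℝ) < 2)]
  exact div_le_self (by positivity) h3

lemma consF_le_one {t x m : ℝ} (ht : 0 ≤ t) (hx : 0 < x) (h : consF t x = m) (hm : m ≤ 1) :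
    x ≤ 1 := by
  rw [consF_eq] at h
  by_contra! h1
  have : 0 < (x - 1) * (1 + t * x)^2 := mul_pos (by linarith) (by positivity)
  nlinarith

/-- Let `T > 0`, `m₀ ∈ (0,1]`, and let `M(t,m)` be the root of the consistency
equation with the same sign as `m`: for `m > 0` it is the unique positive
solution of `t²M³ + t(2−t)M² + (1−2t)M = m`, `M(t,0) = 0`, and
`M(t,m) = −M(t,−m)` for `m < 0`. Let `Z(t,m) = 2M(t,m)/(t|M(t,m)|+1)` be the
entropy solution of the master equation. Then the initial value problem
`m′(t) = −m(t)|Z(T−t,m(t))| + Z(T−t,m(t))`, `m(0) = m₀`, has a unique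
differentiable solution `m : [0,T] → [−1,1]`, and it satisfies
`m(t) ≥ m₀ > 0` for all `t ∈ [0,T]`. -/
theorem stmt_14 (T m₀ : ℝ) (hT : 0 < T) (hm₀ : m₀ ∈ Set.Ioc (0:ℝ) 1)
    (M : ℝ → ℝ → ℝ)
    (hMpos : ∀ t ∈ Set.Icc (0:ℝ) T, ∀ m ∈ Set.Ioc (0:ℝ) 1,
      (0 < M t m ∧
        t^2 * (M t m)^3 + t*(2 - t) * (M t m)^2 + (1 - 2*t) * (M t m) = m) ∧
      (∀ M' : ℝ, 0 < M' →
        t^2 * M'^3 + t*(2 - t) * M'^2 + (1 - 2*t) * M' = m → M' = M t m))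
    (hM0 : ∀ t ∈ Set.Icc (0:ℝ) T, M t 0 = 0)
    (hMneg : ∀ t ∈ Set.Icc (0:ℝ) T, ∀ m ∈ Set.Ico (-1:ℝ) 0, M t m = - M t (-m)) :
    let Z : ℝ → ℝ → ℝ := fun t m => 2 * M t m / (t * |M t m| + 1)
    ∃ m : ℝ → ℝ,
      (∀ t ∈ Set.Icc (0:ℝ) T, m t ∈ Set.Icc (-1:ℝ) 1) ∧
      (∀ t ∈ Set.Icc (0:ℝ) T,
        HasDerivWithinAt m (-(m t) * |Z (T - t) (m t)| + Z (T - t) (m t))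
          (Set.Icc (0:ℝ) T) t) ∧
      m 0 = m₀ ∧
      (∀ t ∈ Set.Icc (0:ℝ) T, m₀ ≤ m t) ∧
      (∀ w : ℝ → ℝ,
        (∀ t ∈ Set.Icc (0:ℝ) T, w t ∈ Set.Icc (-1:ℝ) 1) →
        (∀ t ∈ Set.Icc (0:ℝ) T,
          HasDerivWithinAt w (-(w t) * |Z (T - t) (w t)| + Z (T - t) (w t))
            (Set.Icc (0:ℝ) T) t) →
        w 0 = m₀ → Set.EqOn w m (Set.Icc 0 T)) := by
  intro Z
  obtain ⟨hm0, hm1⟩ := hm₀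
  have hF : ∀ t ∈ Set.Icc (0:ℝ) T, ∀ m ∈ Set.Ioc (0:ℝ) 1,
      0 < M t m ∧ M t m ≤ 1 ∧ consF t (M t m) = m := by
    intro t ht m hm
    have h := (hMpos t ht m hm).1
    exact ⟨h.1, consF_le_one ht.1 h.1 h.2 hm.2, h.2⟩
  have hZ : ∀ t ∈ Set.Icc (0:ℝ) T, ∀ m ∈ Set.Ioc (0:ℝ) 1,
      Z t m = 2 * M t m / (t * M t m + 1) ∧ 0 ≤ Z t m ∧ Z t m ≤ 2 := by
    intro t ht m hm
    obtain ⟨h1, h2, -⟩ := hF t ht m hm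
    have e : Z t m = 2 * M t m / (t * M t m + 1) := by
      simp only [Z]; rw [abs_of_pos h1]
    have h3 : 0 ≤ t * M t m := mul_nonneg ht.1 h1.le
    refine ⟨e, ?_, ?_⟩
    · rw [e]; positivity
    · rw [e, div_le_iff₀ (by linarith)]; linarith
  have hrev : ∀ t ∈ Set.Icc (0:ℝ) T, T - t ∈ Set.Icc (0:ℝ) T :=
    fun t ht => ⟨by linarith [ht.2], by linarith [ht.1]⟩
  -- the explicit solution
  obtain ⟨hP, hP1, hPF⟩ := hF T ⟨hT.le, le_rfl⟩ m₀ ⟨hm0, hm1⟩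
  set P := M T m₀ with hPdef
  let m : ℝ → ℝ := fun t => 1 - (1 - P) * (1 + (T - t) * P)^2
  have hmF : ∀ t, m t = consF (T - t) P := fun t => (consF_eq _ _).symm
  have hmz : m 0 = m₀ := by rw [hmF, sub_zero, hPF]
  have hmge : ∀ t ∈ Set.Icc (0:ℝ) T, m₀ ≤ m t := by
    intro t ht
    rw [← hmz]
    have h1 : (1 + (T - t) * P)^2 ≤ (1 + (T - 0) * P)^2 := by
      have : 0 ≤ (T - t) * P := mul_nonneg (by linarith [ht.2]) hP.le
      have : (T - t) * P ≤ (T - 0) * P := mul_le_mul_of_nonneg_right (by linarith [ht.1]) hP.le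
      exact pow_le_pow_left₀ (by linarith) (by linarith) 2
    have := mul_le_mul_of_nonneg_left h1 (by linarith : 0 ≤ 1 - P)
    simp only [m]; linarith
  have hmle : ∀ t, m t ≤ 1 := by
    intro t
    have : 0 ≤ (1 - P) * (1 + (T - t) * P)^2 := mul_nonneg (by linarith) (sq_nonneg _)
    simp only [m]; linarith
  have hmder : ∀ t ∈ Set.Icc (0:ℝ) T,
        HasDerivWithinAt m (-(m t) * |Z (T - t) (m t)| + Z (T - t) (m t))
          (Set.Icc (0:ℝ) T) t := by
    intro t ht
    have hmem : m t ∈ Set.Ioc (0:ℝ) 1 := ⟨hm0.trans_le (hmge t ht), hmle t⟩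
    have hMP : P = M (T - t) (m t) :=
      (hMpos _ (hrev t ht) _ hmem).2 P hP (hmF t).symm
    obtain ⟨e, hz0, -⟩ := hZ _ (hrev t ht) _ hmem
    have hpos : 0 < (T - t) * P + 1 := by
      have := mul_nonneg (hrev t ht).1 hP.le
      linarith
    rw [abs_of_nonneg hz0, e, ← hMP]
    have hd : HasDerivAt m (-((1 - P) * (2 * (1 + (T - t) * P) * (-1 * P)))) t := by
      have h1 : HasDerivAt (fun s : ℝ => T - s) (-1) t := by
        simpa using (hasDerivAt_id t).const_sub T
      have h2 := ((((h1.mul_const P).const_add 1).pow 2).const_mul (1 - P)).const_sub 1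
      refine HasDerivAt.congr_deriv (f := m) h2 ?_
      norm_num
    refine HasDerivAt.hasDerivWithinAt ?_
    refine hd.congr_deriv ?_
    simp only [m]
    have hne := hpos.ne'
    have hq := div_mul_cancel₀ (2 * P) hne
    linear_combination (-(1 - P) * (1 + (T - t) * P)) * hq
  have toIci : ∀ (w : ℝ → ℝ) (d t : ℝ), t ∈ Set.Ico (0:ℝ) T →
      HasDerivWithinAt w d (Set.Icc (0:ℝ) T) t → HasDerivWithinAt w d (Set.Ici t) t := by
    intro w d t ht h
    exact h.mono_of_mem_nhdsWithin (Filter.mem_of_superset (Icc_mem_nhdsGE ht.2)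
      (Set.Icc_subset_Icc_left ht.1))
  refine ⟨m, fun t ht => ⟨by linarith [hmge t ht], hmle t⟩, hmder, hmz, hmge, ?_⟩
  intro w hw hwd hw0
  have hwc : ContinuousOn w (Set.Icc 0 T) := fun t ht => (hwd t ht).continuousWithinAt
  have hmc : ContinuousOn m (Set.Icc 0 T) := fun t ht => (hmder t ht).continuousWithinAt
  have hεT : m₀ / (2 * T) * T = m₀ / 2 := by field_simp
  have hε : 0 < m₀ / (2 * T) := by positivity
  set ε := m₀ / (2 * T) with hεdef
  have hlow : ∀ t ∈ Set.Icc (0:ℝ) T, m₀ / 2 ≤ m₀ - ε * t := by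
    intro t ht
    have := mul_le_mul_of_nonneg_left ht.2 hε.le
    linarith
  have hwlow : ∀ t ∈ Set.Icc (0:ℝ) T, m₀ / 2 ≤ w t := by
    intro t ht
    have hfence := image_le_of_deriv_right_lt_deriv_boundary
      (f := fun t => - w t)
      (f' := fun t => -(-(w t) * |Z (T - t) (w t)| + Z (T - t) (w t)))
      (B := fun t => ε * t - m₀) (B' := fun _ => ε) (a := 0) (b := T)
      hwc.neg (fun x hx => (toIci w _ x hx (hwd x (Set.Ico_subset_Icc_self hx))).neg)
      (by simp [hw0])
      (fun x => by simpa using ((hasDerivAt_id x).const_mul ε).sub_const m₀)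
      (by
        intro x hx hxe
        have hx' := Set.Ico_subset_Icc_self hx
        have h1 := hlow x hx'
        have hmem : w x ∈ Set.Ioc (0:ℝ) 1 := ⟨by linarith, (hw x hx').2⟩
        obtain ⟨-, hz0, -⟩ := hZ _ (hrev x hx') _ hmem
        rw [abs_of_nonneg hz0]
        have := mul_nonneg (by linarith [hmem.2] : 0 ≤ 1 - w x) hz0
        linarith)
    have h2 := hfence ht
    linarith [hlow t ht]
  have hc : 0 < m₀ / 2 := by linarith
  refine ODE_solution_unique_of_mem_Icc_right
    (v := fun t x => -x * |Z (T - t) x| + Z (T - t) x)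
    (s := fun _ => Set.Icc (m₀ / 2) 1) (K := Real.toNNReal (2 / (m₀ / 2) + 2)) ?_ hwc
    (fun t ht => toIci w _ t ht (hwd t (Set.Ico_subset_Icc_self ht)))
    (fun t ht => ⟨hwlow t (Set.Ico_subset_Icc_self ht), (hw t (Set.Ico_subset_Icc_self ht)).2⟩)
    hmc (fun t ht => toIci m _ t ht (hmder t (Set.Ico_subset_Icc_self ht)))
    (fun t ht => ⟨by linarith [hmge t (Set.Ico_subset_Icc_self ht)], hmle t⟩)
    (by rw [hw0, hmz])
  intro t ht
  have ht' := hrev t (Set.Ico_subset_Icc_self ht)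
  refine LipschitzOnWith.of_dist_le_mul ?_
  intro x hx y hy
  have hxm : x ∈ Set.Ioc (0:ℝ) 1 := ⟨by linarith [hx.1], hx.2⟩
  have hym : y ∈ Set.Ioc (0:ℝ) 1 := ⟨by linarith [hy.1], hy.2⟩
  obtain ⟨ex, zx0, zx2⟩ := hZ _ ht' x hxm
  obtain ⟨ey, zy0, zy2⟩ := hZ _ ht' y hym
  obtain ⟨px, px1, fx⟩ := hF _ ht' x hxm
  obtain ⟨py, py1, fy⟩ := hF _ ht' y hym
  have hMd := consF_abs ht'.1 py py1 px px1 hc (by rw [fy]; exact hy.1) (by rw [fx]; exact hx.1)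
  rw [fx, fy] at hMd
  have hzd := zdiff ht'.1 py px
  rw [← ex, ← ey] at hzd
  have hMd' : |M (T - t) x - M (T - t) y| ≤ |x - y| / (m₀ / 2) := by
    rw [le_div_iff₀ hc]; linarith
  rw [Real.coe_toNNReal _ (by positivity), Real.dist_eq, Real.dist_eq,
    abs_of_nonneg zx0, abs_of_nonneg zy0]
  have e : -x * Z (T - t) x + Z (T - t) x - (-y * Z (T - t) y + Z (T - t) y)
      = (1 - x) * (Z (T - t) x - Z (T - t) y) - Z (T - t) y * (x - y) := by ring
  rw [e]
  have a1 : |(1 - x) * (Z (T - t) x - Z (T - t) y)| ≤ 2 * (|x - y| / (m₀ / 2)) := by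
    rw [abs_mul, abs_of_nonneg (by linarith [hx.2] : 0 ≤ 1 - x)]
    have : (1 - x) * |Z (T - t) x - Z (T - t) y| ≤ 1 * |Z (T - t) x - Z (T - t) y| :=
      mul_le_mul_of_nonneg_right (by linarith [hxm.1]) (abs_nonneg _)
    linarith
  have a2 : |Z (T - t) y * (x - y)| ≤ 2 * |x - y| := by
    rw [abs_mul, abs_of_nonneg zy0]
    exact mul_le_mul_of_nonneg_right zy2 (abs_nonneg _)
  calc _ ≤ _ := abs_sub _ _
    _ ≤ 2 * (|x - y| / (m₀ / 2)) + 2 * |x - y| := add_le_add a1 a2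
    _ = _ := by ring
end

section
/- Let m₀ ∈ (0,1], let T(m₀) be the unique solution in [1/2,2] of |m₀| = (2T−1)²(T+4)/(27T), and fix T > T(m₀). For m ∈ [0,m₀] denote by M₁(m) < M₂(m) < M₃(m) the three real solutions of T²M³ + T(2−T)M|M| + (1−2T)M = m, and write M₊ = M₃(0) > 0 and M₋ = M₁(0) = −M₊. Then: (i) on [0,m₀] the map m ↦ M₃(m) is strictly increasing, m ↦ M₂(m) is strictly decreasing, and m ↦ M₁(m) is strictly increasing; (ii) for every m ∈ (0,m₀] one has M₃(m) > M₊ = |M₋| > |M₁(m)| > |M₂(m)| > 0. -/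
theorem posComp (T x x' m m' : ℝ) (hT : 1/2 < T) (hx' : 0 < x') (hlt : x' < x) (hm : 0 ≤ m)
    (h : T^2 * x^3 + T*(2 - T) * x * x + (1 - 2*T) * x = m)
    (h' : T^2 * x'^3 + T*(2 - T) * x' * x' + (1 - 2*T) * x' = m') : m' < m := by
  have hx : 0 < x := hx'.trans hlt
  have e : m * x'^2 - m' * x^2 = (x - x') * (x * x' * (T^2 * x * x' + (2*T - 1))) := by
    rw [← h, ← h']; ring
  have h1 : 0 < (x - x') * (x * x' * (T^2 * x * x' + (2*T - 1))) := by
    have a : 0 < x - x' := by linarith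
    have b : 0 < 2*T - 1 := by linarith
    positivity
  have h2 : m * x'^2 ≤ m * x^2 := by gcongr
  have h3 : 0 < (m - m') * x^2 := by nlinarith
  have := (pos_iff_pos_of_mul_pos h3).2 (by positivity)
  linarith

theorem negComp (T a b m y m' : ℝ) (hT : 1/2 < T) (hb : b ≤ 0) (hab : a < b)
    (ha : T^2 * a^3 - T*(2 - T) * a * a + (1 - 2*T) * a = m)
    (hb' : T^2 * b^3 - T*(2 - T) * b * b + (1 - 2*T) * b = m)
    (hy : T^2 * y^3 - T*(2 - T) * y * y + (1 - 2*T) * y = m') (hy0 : y ≤ 0) (hmm : m < m') :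
    a < y ∧ y < b := by
  -- third root is c
  obtain ⟨c, hc⟩ : ∃ c, T^2 * c = T*(2 - T) - T^2 * (a + b) :=
    ⟨(T*(2 - T) - T^2 * (a + b)) / T^2, by field_simp⟩
  have e1 : T^2 * (a^2 + a*b + b^2) - T*(2 - T) * (a + b) + (1 - 2*T) = 0 := by
    have : (a - b) * (T^2 * (a^2 + a*b + b^2) - T*(2 - T) * (a + b) + (1 - 2*T)) = 0 := by
      linear_combination ha - hb'
    rcases mul_eq_zero.1 this with h | h
    · linarith
    · exact h
  have e2 : T^2 * c * (-(a + b)) = T^2 * (a * b) + (2*T - 1) := by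
    linear_combination (-(a+b)) * hc + e1
  have hT2 : 0 < T^2 := by positivity
  have hcpos : 0 < c := by
    have h1 : 0 < T^2 * c * (-(a + b)) := by
      rw [e2]
      have : 0 ≤ a * b := mul_nonneg_of_nonpos_of_nonpos (by linarith) hb
      have := mul_nonneg hT2.le this
      linarith
    have h2 := (pos_iff_pos_of_mul_pos h1).2 (by linarith)
    exact (pos_iff_pos_of_mul_pos h2).1 hT2
  have e3 : m' - m = T^2 * ((y - a) * (y - b) * (y - c)) := by
    linear_combination ha - hy + ((y - a) * (y - b)) * hc + (y - a) * e1
  have h4 : 0 < T^2 * ((c - y) * ((y - a) * (b - y))) := by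
    have : T^2 * ((c - y) * ((y - a) * (b - y))) = m' - m := by rw [e3]; ring
    linarith
  have h5 := (pos_iff_pos_of_mul_pos h4).1 hT2
  have h6 := (pos_iff_pos_of_mul_pos h5).1 (by linarith)
  rcases mul_pos_iff.1 h6 with h | h
  · constructor <;> linarith [h.1, h.2]
  · linarith [h.1, h.2]

theorem notThree (T a b d m : ℝ) (hT : 1/2 < T) (hd : d ≤ 0) (hab : a < b) (hbd : b < d)
    (ha : T^2 * a^3 - T*(2 - T) * a * a + (1 - 2*T) * a = m)
    (hb : T^2 * b^3 - T*(2 - T) * b * b + (1 - 2*T) * b = m)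
    (hd' : T^2 * d^3 - T*(2 - T) * d * d + (1 - 2*T) * d = m) (hm : 0 < m) : False := by
  have e1 : T^2 * (a^2 + a*b + b^2) - T*(2 - T) * (a + b) + (1 - 2*T) = 0 := by
    have : (a - b) * (T^2 * (a^2 + a*b + b^2) - T*(2 - T) * (a + b) + (1 - 2*T)) = 0 := by
      linear_combination ha - hb
    rcases mul_eq_zero.1 this with h | h
    · linarith
    · exact h
  have e2 : T^2 * (d^2 + d*b + b^2) - T*(2 - T) * (d + b) + (1 - 2*T) = 0 := by
    have : (d - b) * (T^2 * (d^2 + d*b + b^2) - T*(2 - T) * (d + b) + (1 - 2*T)) = 0 := by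
      linear_combination hd' - hb
    rcases mul_eq_zero.1 this with h | h
    · linarith
    · exact h
  have e3 : T^2 * (a + b + d) - T*(2 - T) = 0 := by
    have : (a - d) * (T^2 * (a + b + d) - T*(2 - T)) = 0 := by
      linear_combination e1 - e2
    rcases mul_eq_zero.1 this with h | h
    · linarith
    · exact h
  have e4 : m = T^2 * (a * b * d) := by
    linear_combination -ha + a * e1 - a * b * e3
  have h1 : 0 < a * b := mul_pos_of_neg_of_neg (by linarith) (by linarith)
  have h2 : a * b * d ≤ 0 := mul_nonpos_of_nonneg_of_nonpos h1.le hd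
  have h3 : T^2 * (a * b * d) ≤ 0 := mul_nonpos_of_nonneg_of_nonpos (sq_nonneg T) h2
  linarith

/-- Let `m₀ ∈ (0,1]`, `Tm = T(m₀)` the unique solution in `[1/2,2]` of
`|m₀| = (2T−1)²(T+4)/(27T)`, and `T > Tm`. For `m ∈ [0,m₀]` let
`M₁(m) < M₂(m) < M₃(m)` be the three real solutions of
`T²M³ + T(2−T)M|M| + (1−2T)M = m`. Then on `[0,m₀]` the map `M₃` is strictly
increasing, `M₂` strictly decreasing, `M₁` strictly increasing; moreover, with
`M₊ = M₃(0) > 0` and `M₋ = M₁(0) = −M₊`, for every `m ∈ (0,m₀]` one has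
`M₃(m) > M₊ = |M₋| > |M₁(m)| > |M₂(m)| > 0`. -/
theorem stmt_15 (m₀ Tm T : ℝ) (hm₀ : m₀ ∈ Set.Ioc (0:ℝ) 1)
    (hTm : Tm ∈ Set.Icc (1/2 : ℝ) 2 ∧ |m₀| = (2*Tm - 1)^2 * (Tm + 4) / (27*Tm))
    (hT : Tm < T)
    (M1 M2 M3 : ℝ → ℝ)
    (hroots : ∀ m ∈ Set.Icc (0:ℝ) m₀,
      M1 m < M2 m ∧ M2 m < M3 m ∧
      (T^2 * (M1 m)^3 + T*(2 - T) * (M1 m) * |M1 m| + (1 - 2*T) * (M1 m) = m) ∧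
      (T^2 * (M2 m)^3 + T*(2 - T) * (M2 m) * |M2 m| + (1 - 2*T) * (M2 m) = m) ∧
      (T^2 * (M3 m)^3 + T*(2 - T) * (M3 m) * |M3 m| + (1 - 2*T) * (M3 m) = m) ∧
      (∀ M : ℝ, T^2 * M^3 + T*(2 - T) * M * |M| + (1 - 2*T) * M = m →
        M = M1 m ∨ M = M2 m ∨ M = M3 m)) :
    StrictMonoOn M3 (Set.Icc 0 m₀) ∧
    StrictAntiOn M2 (Set.Icc 0 m₀) ∧
    StrictMonoOn M1 (Set.Icc 0 m₀) ∧
    0 < M3 0 ∧ M1 0 = -(M3 0) ∧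
    (∀ m ∈ Set.Ioc (0:ℝ) m₀,
      M3 0 < M3 m ∧ |M1 m| < M3 0 ∧ |M2 m| < |M1 m| ∧ 0 < |M2 m|) := by
  have hT' : 1/2 < T := lt_of_le_of_lt hTm.1.1 hT
  have hm0 : 0 < m₀ := hm₀.1
  have pE : ∀ x m : ℝ, 0 ≤ x → T^2 * x^3 + T*(2 - T) * x * |x| + (1 - 2*T) * x = m →
      T^2 * x^3 + T*(2 - T) * x * x + (1 - 2*T) * x = m := by
    intro x m hx h
    rwa [abs_of_nonneg hx] at h
  have nE : ∀ x m : ℝ, x ≤ 0 → T^2 * x^3 + T*(2 - T) * x * |x| + (1 - 2*T) * x = m →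
      T^2 * x^3 - T*(2 - T) * x * x + (1 - 2*T) * x = m := by
    intro x m hx h
    rw [abs_of_nonpos hx] at h
    linarith
  have z : M2 0 = 0 ∧ 0 < M3 0 ∧ M1 0 = -(M3 0) := by
    obtain ⟨h12, h23, h1, h2, h3, hu⟩ := hroots 0 ⟨le_rfl, hm0.le⟩
    have n1 := hu (-(M1 0)) (by rw [abs_neg]; linear_combination -h1)
    have n3 := hu (-(M3 0)) (by rw [abs_neg]; linear_combination -h3)
    have hz : M2 0 = 0 := by
      rcases hu 0 (by simp) with h | h | h
      · rcases n3 with k | k | k <;> linarith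
      · exact h.symm
      · rcases n1 with k | k | k <;> linarith
    refine ⟨hz, by linarith, ?_⟩
    rcases n3 with k | k | k <;> linarith
  have s : ∀ m ∈ Set.Ioc (0:ℝ) m₀, M2 m < 0 ∧ 0 < M3 m := by
    intro m hm
    obtain ⟨h12, h23, h1, h2, h3, hu⟩ := hroots m ⟨hm.1.le, hm.2⟩
    have p3 : 0 < M3 m := by
      by_contra hn
      push Not at hn
      exact notThree T _ _ _ m hT' hn h12 h23 (nE _ _ (by linarith) h1)
        (nE _ _ (by linarith) h2) (nE _ _ hn h3) hm.1
    refine ⟨?_, p3⟩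
    by_contra hn
    push Not at hn
    rcases hn.eq_or_lt with h | h
    · rw [← h] at h2
      simp at h2
      linarith [hm.1]
    · exact lt_irrefl _ (posComp T _ _ m m hT' h h23 hm.1.le (pE _ _ p3.le h3) (pE _ _ h.le h2))
  have s' : ∀ m ∈ Set.Icc (0:ℝ) m₀, M2 m ≤ 0 ∧ 0 < M3 m := by
    intro m hm
    rcases hm.1.eq_or_lt with h | h
    · rw [← h]; exact ⟨z.1.le, z.2.1⟩
    · exact ⟨(s m ⟨h, hm.2⟩).1.le, (s m ⟨h, hm.2⟩).2⟩
  have A3 : StrictMonoOn M3 (Set.Icc 0 m₀) := by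
    intro m hm m' hm' hlt
    have h3 := (hroots m hm).2.2.2.2.1
    have h3' := (hroots m' hm').2.2.2.2.1
    have p := (s' m hm).2
    have p' := (s' m' hm').2
    by_contra hn
    push Not at hn
    rcases hn.eq_or_lt with h | h
    · rw [h] at h3'
      linarith
    · have := posComp T _ _ m m' hT' p' h hm.1 (pE _ _ p.le h3) (pE _ _ p'.le h3')
      linarith
  have A2 : StrictAntiOn M2 (Set.Icc 0 m₀) := by
    intro m hm m' hm' hlt
    obtain ⟨h12, h23, h1, h2, h3, hu⟩ := hroots m hm
    have h2' := (hroots m' hm').2.2.2.1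
    have p := (s' m hm).1
    have p' := (s' m' hm').1
    exact (negComp T _ _ m _ m' hT' p h12 (nE _ _ (by linarith) h1) (nE _ _ p h2)
      (nE _ _ p' h2') p' hlt).2
  have A1 : StrictMonoOn M1 (Set.Icc 0 m₀) := by
    intro m hm m' hm' hlt
    obtain ⟨h12, h23, h1, h2, h3, hu⟩ := hroots m hm
    have h12' := (hroots m' hm').1
    have h1' := (hroots m' hm').2.2.1
    have p := (s' m hm).1
    have p' := (s' m' hm').1
    exact (negComp T _ _ m _ m' hT' p h12 (nE _ _ (by linarith) h1) (nE _ _ p h2)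
      (nE _ _ (by linarith) h1') (by linarith) hlt).1
  refine ⟨A3, A2, A1, z.2.1, z.2.2, ?_⟩
  intro m hm
  have i0 : (0:ℝ) ∈ Set.Icc 0 m₀ := ⟨le_rfl, hm0.le⟩
  have im : m ∈ Set.Icc 0 m₀ := ⟨hm.1.le, hm.2⟩
  have h12 := (hroots m im).1
  have n2 := (s m hm).1
  have k := A1 i0 im hm.1
  rw [z.2.2] at k
  rw [abs_of_neg n2, abs_of_neg (h12.trans n2)]
  exact ⟨A3 i0 im hm.1, by linarith, by linarith, by linarith⟩
end

section
/- Let T > 1/2, m > 0, and let M₁ < M₂ < 0 be two negative solutions of T²M³ − T(2−T)M² + (1−2T)M = m. Set q = −(2T−1)/(3T). Then M₁ < q < M₂ < 0, and |M₂ − q| > |M₁ − q|, i.e. M₂ − q > q − M₁. -/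
/-- Let `T > 1/2`, `m > 0`, and `M₁ < M₂ < 0` two negative solutions of
`T²M³ − T(2−T)M² + (1−2T)M = m`. With `q = −(2T−1)/(3T)` one has
`M₁ < q < M₂ < 0` and `|M₂ − q| > |M₁ − q|`, i.e. `M₂ − q > q − M₁`. -/
theorem stmt_16 (T m M1 M2 : ℝ) (hT : 1/2 < T) (hm : 0 < m)
    (h12 : M1 < M2) (hM2neg : M2 < 0)
    (hM1 : T^2 * M1^3 - T*(2 - T) * M1^2 + (1 - 2*T) * M1 = m)
    (hM2 : T^2 * M2^3 - T*(2 - T) * M2^2 + (1 - 2*T) * M2 = m) :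
    M1 < -(2*T - 1)/(3*T) ∧ -(2*T - 1)/(3*T) < M2 ∧
    (-(2*T - 1)/(3*T)) - M1 < M2 - (-(2*T - 1)/(3*T)) := by
  have hT0 : 0 < T := by linarith
  obtain ⟨q, hq⟩ : ∃ q, q = -(2*T - 1)/(3*T) := ⟨_, rfl⟩
  rw [← hq]
  have hqT : 3 * T * q = -(2*T-1) := by rw [hq]; field_simp
  obtain ⟨u, hu⟩ : ∃ u, u = M1 - q := ⟨_, rfl⟩
  obtain ⟨v, hv⟩ : ∃ v, v = M2 - q := ⟨_, rfl⟩
  have e1 : M1 = u + q := by linarith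
  have e2 : M2 = v + q := by linarith
  subst e1 e2
  have huv : u < v := by linarith
  have key : (T+1)*(u+v) = T*(u^2+u*v+v^2) := by
    have h : T * (v - u) * ((T+1)*(u+v) - T*(u^2+u*v+v^2)) = 0 := by
      linear_combination hM1 - hM2 + (v-u) * (T*(u+v) + T*q - 1) * hqT
    have h2 : T * (v - u) ≠ 0 := (mul_pos hT0 (by linarith)).ne'
    have := (mul_eq_zero.mp h).resolve_left h2
    linarith
  have hsq : 0 < u^2+u*v+v^2 := by
    nlinarith [sq_nonneg (u+v), mul_pos (sub_pos.2 huv) (sub_pos.2 huv)]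
  have hs : 0 < u + v := by
    have : 0 < (T+1)*(u+v) := by rw [key]; positivity
    exact pos_of_mul_pos_right this (by linarith)
  have hu0 : u < 0 := by
    by_contra! h
    have hTv : 3*T*v < 2*T-1 := by nlinarith
    have h1 : u^2+u*v+v^2 ≤ 3/2*v*(u+v) := by
      nlinarith [mul_nonneg h (sub_pos.2 huv).le, sq_nonneg (v-u)]
    have h2 := mul_le_mul_of_nonneg_left h1 hT0.le
    have h3 := mul_lt_mul_of_pos_right hTv hs
    nlinarith
  refine ⟨by linarith, by linarith, by linarith⟩
end

section
/- Let m₀ ∈ (0,1], let T(m₀) be the unique solution in [1/2,2] of |m₀| = (2T−1)²(T+4)/(27T), fix T > T(m₀), and let m ∈ (0,m₀]. Let M₁ < M₂ < 0 < M₃ be the three real solutions of T²M³ + T(2−T)M|M| + (1−2T)M = m, and let M₊ be the unique positive solution of T²M² + T(2−T)M + 1 − 2T = 0. Define φ(M) = M²(T − 1/2 − T|M|). Then φ(M₃) < φ(M₊) < φ(M₁) < φ(M₂) and φ(M₂) > 0 > φ(M₊). -/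
/-- Let `m₀ ∈ (0,1]`, `Tm = T(m₀)` the solution in `[1/2,2]` of
`|m₀| = (2T−1)²(T+4)/(27T)`, `T > Tm`, and `m ∈ (0,m₀]`. Let
`M₁ < M₂ < 0 < M₃` be the three real solutions of
`T²M³ + T(2−T)M|M| + (1−2T)M = m`, and `M₊` the unique positive solution of
`T²M² + T(2−T)M + 1 − 2T = 0`. Then, with `φ(M) = M²(T − 1/2 − T|M|)`,
`φ(M₃) < φ(M₊) < φ(M₁) < φ(M₂)` and `φ(M₂) > 0 > φ(M₊)`. -/
theorem stmt_18 (m₀ Tm T m M1 M2 M3 Mp : ℝ) (hm₀ : m₀ ∈ Set.Ioc (0:ℝ) 1)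
    (hTm : Tm ∈ Set.Icc (1/2 : ℝ) 2 ∧ |m₀| = (2*Tm - 1)^2 * (Tm + 4) / (27*Tm))
    (hT : Tm < T) (hm : m ∈ Set.Ioc (0:ℝ) m₀)
    (hord : M1 < M2 ∧ M2 < 0 ∧ 0 < M3)
    (hM1 : T^2 * M1^3 + T*(2 - T) * M1 * |M1| + (1 - 2*T) * M1 = m)
    (hM2 : T^2 * M2^3 + T*(2 - T) * M2 * |M2| + (1 - 2*T) * M2 = m)
    (hM3 : T^2 * M3^3 + T*(2 - T) * M3 * |M3| + (1 - 2*T) * M3 = m)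
    (hall : ∀ M : ℝ, T^2 * M^3 + T*(2 - T) * M * |M| + (1 - 2*T) * M = m →
      M = M1 ∨ M = M2 ∨ M = M3)
    (hMp : 0 < Mp ∧ T^2 * Mp^2 + T*(2 - T) * Mp + 1 - 2*T = 0)
    (hMpuniq : ∀ M' : ℝ, 0 < M' →
      T^2 * M'^2 + T*(2 - T) * M' + 1 - 2*T = 0 → M' = Mp) :
    let φ : ℝ → ℝ := fun M => M^2 * (T - 1/2 - T * |M|)
    φ M3 < φ Mp ∧ φ Mp < φ M1 ∧ φ M1 < φ M2 ∧ 0 < φ M2 ∧ φ Mp < 0 := by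
  obtain ⟨h12, h2, h3⟩ := hord
  obtain ⟨hp, hq⟩ := hMp
  have hT2 : 1/2 < T := lt_of_le_of_lt hTm.1.1 hT
  have hT0 : 0 < T := by linarith
  have hm0 : 0 < m := hm.1
  intro φ
  have key : ∀ x y : ℝ, 0 < x → x < y → T - 1/2 < T * y →
      y^2 * (T - 1/2 - T * y) < x^2 * (T - 1/2 - T * x) := by
    intro x y hx hxy hy
    have h : 0 < (y - x) * (y * (T*y - (T - 1/2)) + x * (T*y - (T-1/2)) + T * x^2) := by
      have h1 : 0 < T*y - (T - 1/2) := by linarith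
      have h4 : 0 < y - x := by linarith
      have h5 : 0 < y := by linarith
      positivity
    linarith [h]
  rw [abs_of_neg (by linarith : M1 < 0)] at hM1
  rw [abs_of_neg h2] at hM2
  rw [abs_of_pos h3] at hM3
  obtain ⟨a, rfl⟩ : ∃ a, M1 = -a := ⟨-M1, by ring⟩
  obtain ⟨b, rfl⟩ : ∃ b, M2 = -b := ⟨-M2, by ring⟩
  have hb : 0 < b := by linarith
  have hab : b < a := by linarith
  have ha : 0 < a := by linarith
  have e1 : φ M3 = M3^2 * (T - 1/2 - T * M3) := by simp only [φ, abs_of_pos h3]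
  have e2 : φ Mp = Mp^2 * (T - 1/2 - T * Mp) := by simp only [φ, abs_of_pos hp]
  have e3 : φ (-a) = a^2 * (T - 1/2 - T * a) := by
    simp only [φ, abs_neg, abs_of_pos ha, neg_sq]
  have e4 : φ (-b) = b^2 * (T - 1/2 - T * b) := by
    simp only [φ, abs_neg, abs_of_pos hb, neg_sq]
  rw [e1, e2, e3, e4]
  -- positivity of the slope factor
  have hs : 0 < T^2 * Mp + T * (2 - T) := by
    by_contra hc
    linarith [mul_nonneg hp.le (not_lt.mp hc |> sub_nonneg.mpr)]
  have qa : T^2 * a^2 + T*(2 - T) * a + 1 - 2*T < 0 := by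
    by_contra hc
    linarith [mul_nonneg ha.le (not_lt.mp hc)]
  have q3 : 0 < T^2 * M3^2 + T*(2 - T) * M3 + 1 - 2*T := by
    by_contra hc
    linarith [mul_nonneg h3.le (sub_nonneg.mpr (not_lt.mp hc))]
  have mono : ∀ x : ℝ, 0 < x → 0 < T^2 * (x + Mp) + T * (2 - T) := by
    intro x hx
    have : 0 < T^2 * x := by positivity
    linarith
  have hap : a < Mp := by
    by_contra hc
    linarith [mul_nonneg (sub_nonneg.mpr (not_lt.mp hc)) (mono a ha).le]
  have hp3 : Mp < M3 := by
    by_contra hc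
    linarith [mul_nonneg (sub_nonneg.mpr (not_lt.mp hc)) (mono M3 h3).le]
  have hz : T - 1/2 < T * Mp := by
    by_contra hc
    have hc' := not_lt.mp hc
    have h0 : 0 < T * Mp := by positivity
    -- with y = T Mp, y^2 + (2-T) y + 1 - 2T = 0
    have hy : (T*Mp)^2 + (2 - T) * (T*Mp) + 1 - 2*T = 0 := by linarith [hq]
    linarith [mul_nonneg h0.le (sub_nonneg.mpr hc')]
  have hz3 : T - 1/2 < T * M3 := hz.trans (mul_lt_mul_of_pos_left hp3 hT0)
  -- relation between a and b
  have hrel : T^2 * (a^2 + a*b + b^2) + T*(2-T)*(a+b) + (1 - 2*T) = 0 := by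
    have h : (a - b) * (T^2 * (a^2 + a*b + b^2) + T*(2-T)*(a+b) + (1 - 2*T)) = 0 := by
      linarith [hM1, hM2]
    rcases mul_eq_zero.mp h with h | h
    · linarith
    · exact h
  have hS : 3 * (T * (a + b)) < 2 * (2*T - 1) := by
    by_contra hc
    have hc' := not_lt.mp hc
    have hd : 0 < T^2 * (a - b)^2 := by
      have : 0 < a - b := by linarith
      positivity
    have hl : 3 * (T*(a+b))^2 + 4*(2-T)*(T*(a+b)) - 4*(2*T-1) < 0 := by
      linarith [hrel, hd]
    have hfac : 0 ≤ (3 * (T * (a + b)) - 2 * (2*T - 1)) * (T*(a+b) + 2) := by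
      have : 0 < T*(a+b) := by positivity
      exact mul_nonneg (by linarith) (by linarith)
    linarith [hl, hfac]
  have hTb : T * b < T * a := mul_lt_mul_of_pos_left hab hT0
  refine ⟨key Mp M3 hp hp3 hz3, key a Mp ha hap hz, ?_, ?_, ?_⟩
  · have hQ : 0 < T * (a^2 + a*b + b^2) - (T - 1/2) * (a+b) := by
      have : 0 < T * (T * (a^2 + a*b + b^2) - (T - 1/2) * (a+b)) := by
        linarith [hrel, hS]
      exact pos_of_mul_pos_right this hT0.le
    have := mul_pos (sub_pos.mpr hab) hQ
    linarith [this]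
  · have : 0 < T - 1/2 - T * b := by linarith
    positivity
  · have : 0 < Mp^2 * (T * Mp - (T - 1/2)) := mul_pos (by positivity) (by linarith)
    linarith [this]
end

section
/- Let T > 0, m₀ ∈ ℝ, and let M ≠ 0 satisfy T²M³ + T(2−T)M|M| + (1−2T)M = m₀. Define z(t) = 2M/(|M|(T−t)+1) and m(t) = (m₀ − sgn(M)) · ((|M|(T−t)+1)/(|M|T+1))² + sgn(M) for t ∈ [0,T]. Then ∫₀ᵀ [ ((1+m(t))/4)·((z(t))⁻)² + ((1−m(t))/4)·((z(t))⁺)² ] dt − M²/2 = M²(T − 1/2 − T|M|). -/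
/-- Let `T > 0`, `m₀ ∈ ℝ`, and `M ≠ 0` with
`T²M³ + T(2−T)M|M| + (1−2T)M = m₀`. For `z(t) = 2M/(|M|(T−t)+1)` and
`m(t) = (m₀ − sgn M)·((|M|(T−t)+1)/(|M|T+1))² + sgn M`, one has
`∫₀ᵀ [((1+m)/4)(z⁻)² + ((1−m)/4)(z⁺)²] dt − M²/2 = M²(T − 1/2 − T|M|)`,
where `p⁻ = max (−p) 0` and `p⁺ = max p 0`. -/
theorem stmt_19 (T m₀ M : ℝ) (hT : 0 < T) (hM : M ≠ 0)
    (hcons : T^2 * M^3 + T*(2 - T) * M * |M| + (1 - 2*T) * M = m₀) :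
    let z : ℝ → ℝ := fun t => 2*M / (|M| * (T - t) + 1)
    let m : ℝ → ℝ := fun t =>
      (m₀ - Real.sign M) * ((|M| * (T - t) + 1) / (|M| * T + 1))^2 + Real.sign M
    (∫ t in (0:ℝ)..T,
        ((1 + m t)/4 * (max (-(z t)) 0)^2 + (1 - m t)/4 * (max (z t) 0)^2))
      - M^2/2 = M^2 * (T - 1/2 - T * |M|) := by
  intro z m
  have key : ∀ t ∈ Set.uIcc (0:ℝ) T,
      ((1 + m t)/4 * (max (-(z t)) 0)^2 + (1 - m t)/4 * (max (z t) 0)^2)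
        = M^2 * (1 - |M|) := by
    intro t ht
    rw [Set.uIcc_of_le hT.le] at ht
    have hTt : 0 ≤ T - t := by linarith [ht.2]
    have hw : 0 < |M| * (T - t) + 1 := by positivity
    have hv : 0 < |M| * T + 1 := by positivity
    simp only [z, m]
    rcases lt_or_gt_of_ne hM with h | h
    · have hz : 2 * M / (|M| * (T - t) + 1) ≤ 0 :=
        div_nonpos_of_nonpos_of_nonneg (by linarith) hw.le
      rw [max_eq_left (by linarith), max_eq_right hz, Real.sign_of_neg h]
      have h1 : m₀ - -1 = (1 - |M|) * (|M| * T + 1)^2 := by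
        rw [← hcons, abs_of_neg h]; ring
      rw [h1]
      generalize |M| * (T - t) + 1 = w at *
      generalize |M| * T + 1 = v at *
      field_simp
      ring
    · have hz : 0 ≤ 2 * M / (|M| * (T - t) + 1) := by positivity
      rw [max_eq_right (by linarith), max_eq_left hz, Real.sign_of_pos h]
      have h1 : m₀ - 1 = -((1 - |M|) * (|M| * T + 1)^2) := by
        rw [← hcons, abs_of_pos h]; ring
      rw [h1]
      generalize |M| * (T - t) + 1 = w at *
      generalize |M| * T + 1 = v at *
      field_simp
      ring
  rw [intervalIntegral.integral_congr key, intervalIntegral.integral_const, smul_eq_mul]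
  ring
end
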